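/- Let (S,T) be a Cuntz-type representation of F_θ^+ on H (m ≥ 2 or n ≥ 2). If for some k,l > 0 the row-isometry [S_uT_v : |u|=k, |v|=l] is of dilation type, then its structure projection dominates all the others: P_{k,l} ≥ P_{p,q} for all p,q > 0, i.e. P_{p,q}H ⊆ P_{k,l}H. -/

import Mathlib

noncomputable section

open scoped InnerProductSpace ComplexInnerProductSpace Classical

section GeneralDefs

variable {E : Type*} [NormedAddCommGroup E] [InnerProductSpace ℂ E]

/-- The operator associated to a word: `wordOp V [a₁, …, a_r] = V a₁ * ⋯ * V a_r`. -/
def wordOp {ι : Type*} (V : ι → E →L[ℂ] E) (w : List ι) : E →L[ℂ] E :=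
  (w.map V).prod

/-- The operator associated to a word of fixed length `k` given as a function `Fin k → ι`. -/
def fnWordOp {ι : Type*} {k : ℕ} (V : ι → E →L[ℂ] E) (u : Fin k → ι) : E →L[ℂ] E :=
  wordOp V (List.ofFn u)

/-- The closure of a set of operators in the weak operator topology, described via
basic WOT-neighbourhoods (finitely many vector functionals). -/
def wotClosure (S : Set (E →L[ℂ] E)) : Set (E →L[ℂ] E) :=
  {A | ∀ ε > (0 : ℝ), ∀ F : Finset (E × E), ∃ B ∈ S, ∀ p ∈ F, ‖⟪p.1, (A - B) p.2⟫‖ < ε}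

/-- The unital WOT-closed algebra generated by a set of operators. -/
def genWotAlg (G : Set (E →L[ℂ] E)) : Set (E →L[ℂ] E) :=
  wotClosure ((Algebra.adjoin ℂ G : Subalgebra ℂ (E →L[ℂ] E)) : Set (E →L[ℂ] E))

/-- A wandering vector for a row-isometry `V = [V_a : a ∈ ι]`: a unit vector whose orbit
under all words in the `V_a` is an orthonormal family. -/
def IsWandering {ι : Type*} (V : ι → E →L[ℂ] E) (ζ : E) : Prop :=
  ‖ζ‖ = 1 ∧ ∀ w w' : List ι,
    ⟪wordOp V w ζ, wordOp V w' ζ⟫ = if w = w' then 1 else 0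

/-- Restriction of an operator to an invariant subspace (junk value `0` if not invariant). -/
def restrictCLM (A : E →L[ℂ] E) (M : Submodule ℂ E) : M →L[ℂ] M :=
  if h : ∀ x ∈ M, A x ∈ M then
    { toFun := fun x => ⟨A x, h x x.2⟩
      map_add' := by intro x y; ext; simp
      map_smul' := by intro c x; ext; simp
      cont := Continuous.subtype_mk (A.continuous.comp continuous_subtype_val) _ }
  else 0

/-- The unital WOT-closed algebra on `M` generated by the restrictions of the `V a` to `M`. -/
def rowAlgOn {ι : Type*} (V : ι → E →L[ℂ] E) (M : Submodule ℂ E) : Set (M →L[ℂ] M) :=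
  genWotAlg (Set.range fun a => restrictCLM (V a) M)

/-- The unital WOT-closed algebra on `M` generated by the restrictions of the `V a`
is self-adjoint. -/
def restrictedAlgSelfAdjoint {ι : Type*} (V : ι → E →L[ℂ] E) (M : Submodule ℂ E) : Prop :=
  ∀ A ∈ rowAlgOn V M, ∃ B ∈ rowAlgOn V M,
    ∀ x y : M, ⟪((A x : M) : E), (y : E)⟫ = ⟪(x : E), ((B y : M) : E)⟫

variable [CompleteSpace E]

/-- A row-isometry is of dilation type if it is defect free and has no nonzero reducing
subspace on which it is either absolutely continuous (spanned by wandering vectors) or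
singular (generating a self-adjoint WOT-closed algebra). -/
def IsDilationType {ι : Type*} [Fintype ι] (V : ι → E →L[ℂ] E) : Prop :=
  (∑ a, V a * star (V a)) = 1 ∧
    ¬ ∃ M : Submodule ℂ E, M ≠ ⊥ ∧ IsClosed (M : Set E) ∧
      (∀ a, ∀ x ∈ M, V a x ∈ M) ∧ (∀ a, ∀ x ∈ M, star (V a) x ∈ M) ∧
      ((M = (Submodule.span ℂ {ζ : E | ζ ∈ M ∧ IsWandering V ζ}).topologicalClosure) ∨
        restrictedAlgSelfAdjoint V M)

end GeneralDefs

/-- An isometric representation of the single-vertex 2-graph `F_θ⁺` on a Hilbert space `H`. -/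
structure TwoGraphRep (m n : ℕ) (θ : Equiv.Perm (Fin m × Fin n)) (H : Type*)
    [NormedAddCommGroup H] [InnerProductSpace ℂ H] [CompleteSpace H] where
  S : Fin m → H →L[ℂ] H
  T : Fin n → H →L[ℂ] H
  isometS : ∀ i i', star (S i) * S i' = if i = i' then 1 else 0
  isometT : ∀ j j', star (T j) * T j' = if j = j' then 1 else 0
  comm : ∀ i j, S i * T j = T (θ (i, j)).2 * S (θ (i, j)).1

namespace TwoGraphRep

variable {m n : ℕ} {θ : Equiv.Perm (Fin m × Fin n)} {H : Type*}
  [NormedAddCommGroup H] [InnerProductSpace ℂ H] [CompleteSpace H]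

/-- A representation is of Cuntz type if both row-isometries are defect free. -/
def CuntzType (ρ : TwoGraphRep m n θ H) : Prop :=
  (∑ i, ρ.S i * star (ρ.S i)) = 1 ∧ (∑ j, ρ.T j * star (ρ.T j)) = 1

/-- The nonself-adjoint 2-graph algebra `𝔖`: the unital WOT-closed algebra generated by
the `S_i` and `T_j`. -/
def alg (ρ : TwoGraphRep m n θ H) : Set (H →L[ℂ] H) :=
  genWotAlg (Set.range ρ.S ∪ Set.range ρ.T)

/-- The von Neumann algebra generated by the `S_i` and `T_j`: the WOT-closure of the
unital *-algebra they generate. -/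
def vnAlg (ρ : TwoGraphRep m n θ H) : Set (H →L[ℂ] H) :=
  genWotAlg ((Set.range ρ.S ∪ Set.range ρ.T) ∪ star '' (Set.range ρ.S ∪ Set.range ρ.T))

/-- Wandering vector for the row-isometry `[S_u T_v : |u| = k, |v| = l]`. -/
def IsWanderingKL (ρ : TwoGraphRep m n θ H) (k l : ℕ) (ζ : H) : Prop :=
  ‖ζ‖ = 1 ∧ ∀ (p p' : ℕ) (u u' : List (Fin m)) (v v' : List (Fin n)),
    u.length = p * k → v.length = p * l → u'.length = p' * k → v'.length = p' * l →
    ⟪(wordOp ρ.S u * wordOp ρ.T v) ζ, (wordOp ρ.S u' * wordOp ρ.T v') ζ⟫ =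
      if u = u' ∧ v = v' then 1 else 0

/-- The range of the structure projection `P_{k,l}`: the orthogonal complement of the
closed linear span of the wandering vectors of `[S_u T_v : |u| = k, |v| = l]`. -/
def structSpaceKL (ρ : TwoGraphRep m n θ H) (k l : ℕ) : Submodule ℂ H :=
  ((Submodule.span ℂ {ζ : H | ρ.IsWanderingKL k l ζ}).topologicalClosure)ᗮ

/-- The range of the first structure projection `P = ⋀_{k,l>0} P_{k,l}`. -/
def firstStructSpace (ρ : TwoGraphRep m n θ H) : Submodule ℂ H :=
  ⨅ (k : ℕ) (l : ℕ) (_ : 0 < k) (_ : 0 < l), ρ.structSpaceKL k l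

/-- The row-isometry `[S_u T_v : |u| = k, |v| = l]`. -/
def rowKL (ρ : TwoGraphRep m n θ H) (k l : ℕ) :
    ((Fin k → Fin m) × (Fin l → Fin n)) → H →L[ℂ] H :=
  fun p => fnWordOp ρ.S p.1 * fnWordOp ρ.T p.2

/-- A wandering vector for the representation `(S,T)`. -/
def IsWanderingRep (ρ : TwoGraphRep m n θ H) (ζ : H) : Prop :=
  ‖ζ‖ = 1 ∧ ∀ (u u' : List (Fin m)) (v v' : List (Fin n)),
    ⟪(wordOp ρ.S u * wordOp ρ.T v) ζ, (wordOp ρ.S u' * wordOp ρ.T v') ζ⟫ =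
      if u = u' ∧ v = v' then 1 else 0

/-- The representation is irreducible: the only closed subspaces invariant under all
`S_i, T_j, S_i*, T_j*` are `⊥` and `⊤`. -/
def Irreducible (ρ : TwoGraphRep m n θ H) : Prop :=
  ∀ M : Submodule ℂ H, IsClosed (M : Set H) →
    (∀ i, ∀ x ∈ M, ρ.S i x ∈ M) → (∀ i, ∀ x ∈ M, star (ρ.S i) x ∈ M) →
    (∀ j, ∀ x ∈ M, ρ.T j x ∈ M) → (∀ j, ∀ x ∈ M, star (ρ.T j) x ∈ M) →
    M = ⊥ ∨ M = ⊤

/-- The representation is atomic with standard basis `ξ`: every generator maps each basis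
vector to a unimodular multiple of a basis vector. -/
def AtomicBasis {Λ : Type*} (ρ : TwoGraphRep m n θ H) (ξ : HilbertBasis Λ ℂ H) : Prop :=
  (∀ i t, ∃ (c : ℂ) (t' : Λ), ‖c‖ = 1 ∧ ρ.S i (ξ t) = c • ξ t') ∧
  (∀ j t, ∃ (c : ℂ) (t' : Λ), ‖c‖ = 1 ∧ ρ.T j (ξ t) = c • ξ t')

/-- `x` has a blue ring: `S_u x ∈ 𝕋x` for some nonempty word `u`. -/
def HasBlueRing (ρ : TwoGraphRep m n θ H) (x : H) : Prop :=
  ∃ u : List (Fin m), u ≠ [] ∧ ∃ c : ℂ, ‖c‖ = 1 ∧ wordOp ρ.S u x = c • x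

/-- `x` has a red ring: `T_v x ∈ 𝕋x` for some nonempty word `v`. -/
def HasRedRing (ρ : TwoGraphRep m n θ H) (x : H) : Prop :=
  ∃ v : List (Fin n), v ≠ [] ∧ ∃ c : ℂ, ‖c‖ = 1 ∧ wordOp ρ.T v x = c • x

/-- `x` has a mixed ring: `T_v S_u x ∈ 𝕋x` for some nonempty words `u`, `v`. -/
def HasMixedRing (ρ : TwoGraphRep m n θ H) (x : H) : Prop :=
  ∃ (u : List (Fin m)) (v : List (Fin n)), u ≠ [] ∧ v ≠ [] ∧
    ∃ c : ℂ, ‖c‖ = 1 ∧ wordOp ρ.T v (wordOp ρ.S u x) = c • x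

end TwoGraphRep

section WordOperators

variable {E : Type*} [NormedAddCommGroup E] [InnerProductSpace ℂ E]
  {ι : Type*} (V : ι → E →L[ℂ] E)

@[simp]
theorem wordOp_nil : wordOp V [] = 1 := rfl

theorem wordOp_cons (a : ι) (w : List ι) : wordOp V (a :: w) = V a * wordOp V w := by
  simp [wordOp]

theorem wordOp_cons_apply (a : ι) (w : List ι) (x : E) :
    wordOp V (a :: w) x = V a (wordOp V w x) := by
  simp [wordOp_cons]

theorem wordOp_append (w w' : List ι) : wordOp V (w ++ w') = wordOp V w * wordOp V w' := by
  simp [wordOp]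

theorem wordOp_append_apply (w w' : List ι) (x : E) :
    wordOp V (w ++ w') x = wordOp V w (wordOp V w' x) := by
  simp [wordOp_append]

theorem wordOp_mem {M : Submodule ℂ E} (hM : ∀ a, ∀ x ∈ M, V a x ∈ M) (w : List ι) {x : E}
    (hx : x ∈ M) : wordOp V w x ∈ M := by
  induction w with
  | nil => simpa
  | cons a w ih => rw [wordOp_cons_apply]; exact hM a _ ih

end WordOperators

section WanderingSpan

variable {H : Type*} [NormedAddCommGroup H] [InnerProductSpace ℂ H] {ι : Type*}
  {V : ι → H →L[ℂ] H}

/-- The closed linear span of the wandering vectors of `V` lying in `M`. -/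
def wanderingSpan (V : ι → H →L[ℂ] H) (M : Submodule ℂ H) : Submodule ℂ H :=
  (Submodule.span ℂ {ζ : H | ζ ∈ M ∧ IsWandering V ζ}).topologicalClosure

theorem isClosed_wanderingSpan (V : ι → H →L[ℂ] H) (M : Submodule ℂ H) :
    IsClosed (wanderingSpan V M : Set H) :=
  Submodule.isClosed_topologicalClosure _

theorem mem_wanderingSpan {M : Submodule ℂ H} {ζ : H} (hM : ζ ∈ M) (hζ : IsWandering V ζ) :
    ζ ∈ wanderingSpan V M :=
  Submodule.le_topologicalClosure _ (Submodule.subset_span ⟨hM, hζ⟩)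

theorem wanderingSpan_le {M N : Submodule ℂ H} (hN : IsClosed (N : Set H))
    (h : ∀ ζ ∈ M, IsWandering V ζ → ζ ∈ N) : wanderingSpan V M ≤ N :=
  Submodule.topologicalClosure_minimal _ (Submodule.span_le.2 fun ζ hζ => h ζ hζ.1 hζ.2) hN

theorem wanderingSpan_mono {M N : Submodule ℂ H} (h : M ≤ N) :
    wanderingSpan V M ≤ wanderingSpan V N :=
  wanderingSpan_le (isClosed_wanderingSpan _ _) fun _ hM hζ => mem_wanderingSpan (h hM) hζ

end WanderingSpan

section RowIsometry

variable {H : Type*} [NormedAddCommGroup H] [InnerProductSpace ℂ H] [CompleteSpace H]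

theorem inner_star_apply (A : H →L[ℂ] H) (x y : H) : ⟪x, star A y⟫ = ⟪A x, y⟫ := by
  rw [ContinuousLinearMap.star_eq_adjoint, ContinuousLinearMap.adjoint_inner_right]

variable {ι : Type*} {V : ι → H →L[ℂ] H}

/-- A tuple of isometries with pairwise orthogonal ranges. -/
def IsRowIsometry (V : ι → H →L[ℂ] H) : Prop :=
  ∀ a b, star (V a) * V b = if a = b then 1 else 0

namespace IsRowIsometry

theorem star_apply_self (hV : IsRowIsometry V) (a : ι) (x : H) : star (V a) (V a x) = x := by
  have := congrArg (fun A : H →L[ℂ] H => A x) (hV a a)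
  simpa using this

theorem star_apply_of_ne (hV : IsRowIsometry V) {a b : ι} (h : a ≠ b) (x : H) :
    star (V a) (V b x) = 0 := by
  have := congrArg (fun A : H →L[ℂ] H => A x) (hV a b)
  simpa [h] using this

theorem inner_self (hV : IsRowIsometry V) (a : ι) (x y : H) : ⟪V a x, V a y⟫ = ⟪x, y⟫ := by
  rw [← inner_star_apply, hV.star_apply_self]

theorem inner_of_ne (hV : IsRowIsometry V) {a b : ι} (h : a ≠ b) (x y : H) :
    ⟪V a x, V b y⟫ = 0 := by
  rw [← inner_star_apply, hV.star_apply_of_ne h, inner_zero_right]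

theorem norm_apply (hV : IsRowIsometry V) (a : ι) (x : H) : ‖V a x‖ = ‖x‖ := by
  rw [@norm_eq_sqrt_re_inner ℂ, @norm_eq_sqrt_re_inner ℂ _ _ _ _ x, hV.inner_self]

theorem norm_wordOp (hV : IsRowIsometry V) (w : List ι) (x : H) : ‖wordOp V w x‖ = ‖x‖ := by
  induction w with
  | nil => simp
  | cons a w ih => rw [wordOp_cons_apply, hV.norm_apply, ih]

theorem isWandering_iff (hV : IsRowIsometry V) {ζ : H} :
    IsWandering V ζ ↔ ‖ζ‖ = 1 ∧ ∀ w ≠ [], ⟪wordOp V w ζ, ζ⟫ = 0 := by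
  refine and_congr_right fun hζ => ⟨fun h w hw => by simpa [hw] using h w [], fun h w => ?_⟩
  induction w with
  | nil =>
    intro w'
    rcases eq_or_ne w' [] with rfl | hw'
    · simp [hζ]
    · rw [if_neg (Ne.symm hw'), ← inner_conj_symm, wordOp_nil, one_apply_eq_self, h w' hw']
      simp
  | cons a w ih =>
    intro w'
    cases w' with
    | nil => simpa using h (a :: w) (by simp)
    | cons b w' =>
      rw [wordOp_cons_apply, wordOp_cons_apply]
      rcases eq_or_ne a b with rfl | hab
      · rw [hV.inner_self, ih]; simp
      · rw [hV.inner_of_ne hab]; simp [hab]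

theorem isWandering_apply (hV : IsRowIsometry V) {ζ : H} (hζ : IsWandering V ζ) (u : List ι) :
    IsWandering V (wordOp V u ζ) := by
  refine ⟨by rw [hV.norm_wordOp, hζ.1], fun w w' => ?_⟩
  rw [← wordOp_append_apply, ← wordOp_append_apply, hζ.2]
  simp

/-- A nonzero vector orthogonal to its images under all nonempty words is, up to scaling,
wandering. -/
theorem isWandering_smul (hV : IsRowIsometry V) {ξ : H} (h0 : ξ ≠ 0)
    (h : ∀ w ≠ [], ⟪wordOp V w ξ, ξ⟫ = 0) : IsWandering V ((‖ξ‖⁻¹ : ℂ) • ξ) := by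
  refine hV.isWandering_iff.2 ⟨?_, fun w hw => ?_⟩
  · rw [norm_smul]; simp [h0]
  · rw [map_smul, inner_smul_left, inner_smul_right, h w hw]; simp

end IsRowIsometry

theorem wanderingSpan_invariant (hV : IsRowIsometry V) {M : Submodule ℂ H}
    (hM : ∀ a, ∀ x ∈ M, V a x ∈ M) (a : ι) {x : H} (hx : x ∈ wanderingSpan V M) :
    V a x ∈ wanderingSpan V M := by
  have : wanderingSpan V M ≤ (wanderingSpan V M).comap (V a : H →ₗ[ℂ] H) := by
    refine wanderingSpan_le ((isClosed_wanderingSpan V M).preimage (V a).continuous) ?_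
    intro ζ hζM hζ
    refine mem_wanderingSpan (hM a ζ hζM) ?_
    simpa [wordOp] using hV.isWandering_apply hζ [a]
  exact this hx

/-- The part of an invariant subspace `K` orthogonal to its wandering vectors lies in
`⋂ᵣ V^r K`. -/
theorem star_wordOp_mem_of_orthogonal (hV : IsRowIsometry V) {K : Submodule ℂ H}
    (hK : IsClosed (K : Set H)) (hKV : ∀ a, ∀ x ∈ K, V a x ∈ K)
    (hKs : ∀ x, (∀ a, star (V a) x ∈ K) → x ∈ K) {x : H} (hx : x ∈ K)
    (hxo : x ∈ (wanderingSpan V K)ᗮ) (w : List ι) : star (wordOp V w) x ∈ K := by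
  have key : ∀ x ∈ K, x ∈ (wanderingSpan V K)ᗮ →
      ∀ a, star (V a) x ∈ K ∧ star (V a) x ∈ (wanderingSpan V K)ᗮ := by
    intro x hx hxo a
    constructor
    · let K₁ : Submodule ℂ H := ⨅ a, K.comap (star (V a) : H →L[ℂ] H).toLinearMap
      have hK₁ : ∀ y, y ∈ K₁ ↔ ∀ a, star (V a) y ∈ K := fun y => by simp [K₁, Submodule.mem_iInf]
      have hK₁c : IsClosed (K₁ : Set H) := by
        have : (K₁ : Set H) = ⋂ a, (star (V a) : H →L[ℂ] H) ⁻¹' (K : Set H) := by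
          ext y; simp [hK₁]
        rw [this]
        exact isClosed_iInter fun a => hK.preimage (star (V a)).continuous
      have : CompleteSpace K₁ := hK₁c.completeSpace_coe
      set x₁ : H := K₁.starProjection x with hx₁
      have hx₁m : x₁ ∈ K₁ := Submodule.starProjection_apply_mem _ _
      have hx₂ : x - x₁ ∈ K₁ᗮ := Submodule.sub_starProjection_mem_orthogonal _
      have hx₂K : x - x₁ ∈ K := K.sub_mem hx (hKs _ ((hK₁ _).1 hx₁m))
      have hmem : ∀ b, ∀ y ∈ K, V b y ∈ K₁ := by
        intro b y hy
        rw [hK₁]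
        intro c
        rcases eq_or_ne c b with rfl | hcb
        · rwa [hV.star_apply_self]
        · rw [hV.star_apply_of_ne hcb]; exact K.zero_mem
      have hzero : x - x₁ = 0 := by
        by_contra h0
        have hw := hV.isWandering_smul h0 (fun w hw => by
          obtain ⟨b, w, rfl⟩ := List.exists_cons_of_ne_nil hw
          rw [wordOp_cons_apply]
          exact (Submodule.mem_orthogonal _ _).1 hx₂ _ (hmem b _ (wordOp_mem V hKV w hx₂K)))
        have h1 := (Submodule.mem_orthogonal _ _).1 hxo _
          (mem_wanderingSpan (K.smul_mem _ hx₂K) hw)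
        rw [inner_smul_left] at h1
        have h2 : ⟪x - x₁, x⟫ = 0 := by
          refine (mul_eq_zero.1 h1).resolve_left ?_
          simpa using h0
        have h3 : ⟪x - x₁, x₁⟫ = 0 := by
          rw [← inner_conj_symm, (Submodule.mem_orthogonal _ _).1 hx₂ _ hx₁m, map_zero]
        have h4 : ⟪x - x₁, x - x₁⟫ = 0 := by rw [inner_sub_right, h2, h3, sub_zero]
        exact h0 (inner_self_eq_zero.1 h4)
      rw [sub_eq_zero.1 hzero]
      exact (hK₁ _).1 hx₁m a
    · rw [Submodule.mem_orthogonal]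
      intro z hz
      rw [inner_star_apply]
      exact (Submodule.mem_orthogonal _ _).1 hxo _ (wanderingSpan_invariant hV hKV a hz)
  suffices h : ∀ x ∈ K, x ∈ (wanderingSpan V K)ᗮ → star (wordOp V w) x ∈ K from h x hx hxo
  induction w with
  | nil => intro x hx _; simpa using hx
  | cons a w ih =>
    intro x hx hxo
    rw [wordOp_cons, star_mul]
    exact ih _ (key x hx hxo a).1 (key x hx hxo a).2

/-- If `⋂ᵣ V^r K = 0` then `K` is spanned by its wandering vectors. -/
theorem le_wanderingSpan (hV : IsRowIsometry V) {K : Submodule ℂ H}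
    (hK : IsClosed (K : Set H)) (hKV : ∀ a, ∀ x ∈ K, V a x ∈ K)
    (hKs : ∀ x, (∀ a, star (V a) x ∈ K) → x ∈ K)
    (h : ∀ x, (∀ w, star (wordOp V w) x ∈ K) → x = 0) : K ≤ wanderingSpan V K := by
  intro x hx
  have : CompleteSpace (wanderingSpan V K) := (isClosed_wanderingSpan V K).completeSpace_coe
  have hle : wanderingSpan V K ≤ K := wanderingSpan_le hK fun ζ hζ _ => hζ
  have h1 := Submodule.starProjection_apply_mem (wanderingSpan V K) x
  have h2 := h (x - (wanderingSpan V K).starProjection x)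
    (star_wordOp_mem_of_orthogonal hV hK hKV hKs (K.sub_mem hx (hle h1))
      (Submodule.sub_starProjection_mem_orthogonal _))
  rw [sub_eq_zero.1 h2]
  exact h1

end RowIsometry
section Fock

open ContinuousLinearMap Filter Topology

/-- The full Fock space with orthonormal basis indexed by the words over `ι`. -/
abbrev Fock (ι : Type*) := lp (fun _ : List ι => ℂ) 2

namespace Fock

variable {ι : Type*}

/-- The standard basis vector of a word. -/
def vec (w : List ι) : Fock ι := lp.single 2 w 1

theorem inner_vec_left (w : List ι) (f : Fock ι) : ⟪vec w, f⟫ = f w := by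
  simp [vec, lp.inner_single_left]

theorem inner_vec_vec (w w' : List ι) :
    ⟪(vec w : Fock ι), vec w'⟫ = if w = w' then 1 else 0 := by
  rw [inner_vec_left, vec, lp.single_apply, Pi.single_apply]

theorem ext_inner {f g : Fock ι} (h : ∀ w, ⟪vec w, f⟫ = ⟪vec w, g⟫) : f = g := by
  ext w
  rw [← inner_vec_left, ← inner_vec_left, h]

theorem norm_vec (w : List ι) : ‖(vec w : Fock ι)‖ = 1 := by
  rw [vec, lp.norm_single (by norm_num), norm_one]

theorem orthonormal_vec : Orthonormal ℂ (vec : List ι → Fock ι) :=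
  orthonormal_iff_ite.2 inner_vec_vec

theorem hasSum_vec (f : Fock ι) : HasSum (fun w => f w • vec w) f := by
  convert lp.hasSum_single (by norm_num) f using 2 with w
  rw [vec, ← lp.single_smul, smul_eq_mul, mul_one]

theorem exists_finset_norm_sub_lt (f : Fock ι) {ε : ℝ} (hε : 0 < ε) :
    ∃ F : Finset (List ι), ‖f - ∑ w ∈ F, f w • vec w‖ < ε := by
  obtain ⟨F, hF⟩ := (Metric.tendsto_nhds.1 (hasSum_vec f) ε hε).exists
  exact ⟨F, by rwa [dist_comm, dist_eq_norm] at hF⟩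

section Maps

variable {E : Type*} [NormedAddCommGroup E] [InnerProductSpace ℂ E]

theorem clm_ext {A B : Fock ι →L[ℂ] E} (h : ∀ w, A (vec w) = B (vec w)) : A = B := by
  ext f
  refine ((hasSum_vec f).mapL A).unique ?_
  simpa [h] using (hasSum_vec f).mapL B

variable [CompleteSpace E]

/-- The isometry sending the standard basis to a given orthonormal family. -/
def ofOrthonormal {v : List ι → E} (hv : Orthonormal ℂ v) : Fock ι →ₗᵢ[ℂ] E :=
  hv.orthogonalFamily.linearIsometry

theorem ofOrthonormal_vec {v : List ι → E} (hv : Orthonormal ℂ v) (w : List ι) :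
    ofOrthonormal hv (vec w) = v w := by
  rw [ofOrthonormal, vec, OrthogonalFamily.linearIsometry_apply_single]
  simp

end Maps

/-- The left creation operator `e_w ↦ e_{aw}`. -/
def left (a : ι) : Fock ι →ₗᵢ[ℂ] Fock ι :=
  ofOrthonormal (orthonormal_vec.comp (List.cons a) List.cons_injective)

theorem left_vec (a : ι) (w : List ι) : left a (vec w) = vec (a :: w) :=
  ofOrthonormal_vec _ _

/-- The right creation operator `e_w ↦ e_{wu}`. -/
def right (u : List ι) : Fock ι →ₗᵢ[ℂ] Fock ι :=
  ofOrthonormal (orthonormal_vec.comp (· ++ u) (List.append_left_injective u))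

theorem right_vec (u w : List ι) : right u (vec w) = vec (w ++ u) :=
  ofOrthonormal_vec _ _

theorem inner_vec_nil_left (a : ι) (f : Fock ι) : ⟪vec [], left a f⟫ = 0 := by
  have h := (hasSum_vec f).mapL ((innerSL ℂ (vec [] : Fock ι)).comp (left a).toContinuousLinearMap)
  refine h.unique ?_
  convert hasSum_zero with w
  simp [left_vec, inner_vec_vec]

theorem inner_vec_cons_left (a b : ι) (w : List ι) (f : Fock ι) :
    ⟪vec (b :: w), left a f⟫ = if a = b then ⟪vec w, f⟫ else 0 := by
  split_ifs with hab
  · rw [← hab, ← left_vec, LinearIsometry.inner_map_map]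
  · have h := (hasSum_vec f).mapL
      ((innerSL ℂ (vec (b :: w) : Fock ι)).comp (left a).toContinuousLinearMap)
    refine h.unique ?_
    convert hasSum_zero with w
    simp [left_vec, inner_vec_vec, Ne.symm hab]

theorem norm_adjoint_right_le (u : List ι) (f : Fock ι) :
    ‖adjoint (right u).toContinuousLinearMap f‖ ≤ ‖f‖ := by
  refine (le_opNorm _ _).trans ?_
  rw [LinearIsometryEquiv.norm_map]
  exact mul_le_of_le_one_left (norm_nonneg _) (right u).norm_toContinuousLinearMap_le

theorem adjoint_right_vec {u w : List ι} (h : w.length < u.length) :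
    adjoint (right u).toContinuousLinearMap (vec w) = 0 := by
  refine ext_inner fun w' => ?_
  rw [adjoint_inner_right, LinearIsometry.coe_toContinuousLinearMap, right_vec, inner_vec_vec,
    if_neg, inner_zero_right]
  rintro rfl
  simp at h

/-- Adjoints of right creation operators tend strongly to zero as the length grows. -/
theorem exists_norm_adjoint_right_le (f : Fock ι) {ε : ℝ} (hε : 0 < ε) :
    ∃ N, ∀ u : List ι, N ≤ u.length → ‖adjoint (right u).toContinuousLinearMap f‖ ≤ ε := by
  obtain ⟨F, hF⟩ := exists_finset_norm_sub_lt f hε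
  refine ⟨F.sup List.length + 1, fun u hu => ?_⟩
  have h : adjoint (right u).toContinuousLinearMap (∑ w ∈ F, f w • vec w) = 0 := by
    rw [map_sum]
    refine Finset.sum_eq_zero fun w hw => ?_
    rw [map_smul, adjoint_right_vec, smul_zero]
    exact lt_of_lt_of_le (Nat.lt_succ_of_le (Finset.le_sup (f := List.length) hw)) hu
  calc _ = ‖adjoint (right u).toContinuousLinearMap (f - ∑ w ∈ F, f w • vec w)‖ := by
        rw [map_sub, h, sub_zero]
    _ ≤ _ := (norm_adjoint_right_le _ _).trans hF.le

/-- The squared norm of the part of a vector supported on words of length at least `r`. -/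
def tail [Fintype ι] : ℕ → Fock ι → ℝ
  | 0, f => ‖f‖ ^ 2
  | r + 1, f => ∑ a, tail r (adjoint (left a).toContinuousLinearMap f)

variable [Fintype ι]

theorem sum_norm_adjoint_left_le (f : Fock ι) :
    ∑ a, ‖adjoint (left a).toContinuousLinearMap f‖ ^ 2 ≤ ‖f‖ ^ 2 := by
  set g : ι → Fock ι := fun a => adjoint (left a).toContinuousLinearMap f with hg
  have horth : ∀ a b (x y : Fock ι), a ≠ b → ⟪left a x, left b y⟫ = 0 := by
    intro a b x y hab
    have h := (hasSum_vec x).mapL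
      ((innerSL ℂ (left b y)).comp (left a).toContinuousLinearMap)
    rw [← inner_conj_symm]
    refine (map_eq_zero _).2 (h.unique ?_)
    convert hasSum_zero with w
    rw [map_smul]
    have : ⟪vec (a :: w), left b y⟫ = 0 := by rw [inner_vec_cons_left, if_neg (Ne.symm hab)]
    have h2 : ⟪left b y, vec (a :: w)⟫ = 0 := by rw [← inner_conj_symm, this, map_zero]
    simp [left_vec, h2]
  have h1 : ∀ a, ⟪left a (g a), f⟫ = (‖g a‖ ^ 2 : ℝ) := by
    intro a
    have : ⟪left a (g a), f⟫ = ⟪g a, g a⟫ := by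
      rw [hg, adjoint_inner_right]; rfl
    rw [this, inner_self_eq_norm_sq_to_K]; simp
  have h2 : ⟪∑ a, left a (g a), ∑ a, left a (g a)⟫ = ((∑ a, ‖g a‖ ^ 2 : ℝ) : ℂ) := by
    rw [sum_inner]
    push_cast
    refine Finset.sum_congr rfl fun a _ => ?_
    rw [inner_sum, Finset.sum_eq_single a (fun b _ hb => horth _ _ _ _ hb.symm) (by simp),
      LinearIsometry.inner_map_map, inner_self_eq_norm_sq_to_K]
    simp
  have h3 : ⟪∑ a, left a (g a), f⟫ = ((∑ a, ‖g a‖ ^ 2 : ℝ) : ℂ) := by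
    rw [sum_inner]
    push_cast
    refine Finset.sum_congr rfl fun a _ => ?_
    rw [h1]; simp
  set S : ℝ := ∑ a, ‖g a‖ ^ 2
  have hS : ‖∑ a, left a (g a)‖ ^ 2 = S := by
    have := inner_self_eq_norm_sq_to_K (𝕜 := ℂ) (∑ a, left a (g a))
    rw [h2] at this
    exact Complex.ofReal_injective (by simpa using this.symm)
  have hle : S ≤ ‖∑ a, left a (g a)‖ * ‖f‖ := by
    refine le_trans ?_ (norm_inner_le_norm (𝕜 := ℂ) _ _)
    rw [h3]
    simpa using le_abs_self S
  nlinarith [sq_nonneg (‖∑ a, left a (g a)‖ - ‖f‖)]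

theorem tail_nonneg (r : ℕ) (f : Fock ι) : 0 ≤ tail r f := by
  induction r generalizing f with
  | zero => exact sq_nonneg _
  | succ r ih => exact Finset.sum_nonneg fun a _ => ih _

theorem tail_le (r : ℕ) (f : Fock ι) : tail r f ≤ ‖f‖ ^ 2 := by
  induction r generalizing f with
  | zero => exact le_rfl
  | succ r ih => exact (Finset.sum_le_sum fun a _ => ih _).trans (sum_norm_adjoint_left_le f)

theorem tail_zero_right (r : ℕ) : tail r (0 : Fock ι) = 0 :=
  le_antisymm (by simpa using tail_le r (0 : Fock ι)) (tail_nonneg _ _)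

theorem tail_add_le (r : ℕ) (f g : Fock ι) : tail r (f + g) ≤ 2 * tail r f + 2 * tail r g := by
  induction r generalizing f g with
  | zero =>
    have := norm_add_le f g
    simp only [tail]
    nlinarith [norm_nonneg (f + g), sq_nonneg (‖f‖ - ‖g‖)]
  | succ r ih =>
    simp only [tail, map_add]
    rw [Finset.mul_sum, Finset.mul_sum, ← Finset.sum_add_distrib]
    exact Finset.sum_le_sum fun a _ => ih _ _

theorem tail_smul (r : ℕ) (c : ℂ) (f : Fock ι) : tail r (c • f) = ‖c‖ ^ 2 * tail r f := by
  induction r generalizing f with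
  | zero => simp [tail, norm_smul, mul_pow]
  | succ r ih => simp only [tail, map_smul, ih, Finset.mul_sum]

theorem tail_vec (r : ℕ) (w : List ι) (h : w.length < r) : tail r (vec w) = 0 := by
  induction r generalizing w with
  | zero => simp at h
  | succ r ih =>
    refine Finset.sum_eq_zero fun a _ => ?_
    cases w with
    | nil =>
      have : adjoint (left a).toContinuousLinearMap (vec []) = 0 :=
        ext_inner fun w' => by
          rw [adjoint_inner_right, LinearIsometry.coe_toContinuousLinearMap, left_vec,
            inner_vec_vec, if_neg (by simp), inner_zero_right]
      rw [this, tail_zero_right]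
    | cons b w =>
      have : adjoint (left a).toContinuousLinearMap (vec (b :: w)) =
          (if a = b then 1 else 0 : ℂ) • vec w :=
        ext_inner fun w' => by
          rw [adjoint_inner_right, LinearIsometry.coe_toContinuousLinearMap, left_vec,
            inner_vec_vec, inner_smul_right, inner_vec_vec]
          by_cases h : a = b <;> simp [h]
      rw [this, tail_smul, ih w (by simpa using h), mul_zero]

theorem exists_tail_le (f : Fock ι) {ε : ℝ} (hε : 0 < ε) : ∃ r, tail r f ≤ ε := by
  obtain ⟨F, hF⟩ := exists_finset_norm_sub_lt f (Real.sqrt_pos.2 (half_pos hε))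
  set r := F.sup List.length + 1
  have hz : ∀ G ⊆ F, tail r (∑ w ∈ G, f w • vec w) = 0 := by
    intro G
    induction G using Finset.induction_on with
    | empty => intro _; simpa using tail_zero_right r
    | insert w G hw ih =>
      intro hG
      rw [Finset.sum_insert hw]
      refine le_antisymm ((tail_add_le _ _ _).trans ?_) (tail_nonneg _ _)
      rw [ih ((Finset.subset_insert _ _).trans hG), tail_smul, tail_vec]
      · simp
      · exact Nat.lt_succ_of_le (Finset.le_sup (f := List.length) (hG (Finset.mem_insert_self _ _)))
  refine ⟨r, ?_⟩
  calc tail r f = tail r ((f - ∑ w ∈ F, f w • vec w) + ∑ w ∈ F, f w • vec w) := by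
        rw [sub_add_cancel]
    _ ≤ _ := tail_add_le _ _ _
    _ = 2 * tail r (f - ∑ w ∈ F, f w • vec w) := by rw [hz F subset_rfl]; ring
    _ ≤ 2 * ‖f - ∑ w ∈ F, f w • vec w‖ ^ 2 := by gcongr; exact tail_le _ _
    _ ≤ 2 * (Real.sqrt (ε / 2)) ^ 2 := by gcongr
    _ = ε := by rw [Real.sq_sqrt (half_pos hε).le]; ring

end Fock

end Fock

section Synthesis

open ContinuousLinearMap

variable {H : Type*} [NormedAddCommGroup H] [InnerProductSpace ℂ H]
  {ι : Type*} {V : ι → H →L[ℂ] H} {x : H} {X : Fock ι →L[ℂ] H}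

/-- `X` is a bounded operator on Fock space with `X e_w = V_w x` for all words `w`. -/
def IsSynthesis (V : ι → H →L[ℂ] H) (x : H) (X : Fock ι →L[ℂ] H) : Prop :=
  ∀ w, X (Fock.vec w) = wordOp V w x

/-- The vectors whose orbit under the words in `V` is a Bessel family. -/
def boundedVectors (V : ι → H →L[ℂ] H) : Submodule ℂ H where
  carrier := {x | ∃ X, IsSynthesis V x X}
  add_mem' := by
    rintro x y ⟨X, hX⟩ ⟨Y, hY⟩
    exact ⟨X + Y, fun w => by simp [hX w, hY w]⟩
  zero_mem' := ⟨0, fun w => by simp⟩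
  smul_mem' := by
    rintro c x ⟨X, hX⟩
    exact ⟨c • X, fun w => by simp [hX w]⟩

namespace IsSynthesis

theorem zero : IsSynthesis V 0 0 := fun w => by simp

theorem add {y : H} {Y : Fock ι →L[ℂ] H} (hX : IsSynthesis V x X) (hY : IsSynthesis V y Y) :
    IsSynthesis V (x + y) (X + Y) := fun w => by simp [hX w, hY w]

theorem smul (hX : IsSynthesis V x X) (c : ℂ) : IsSynthesis V (c • x) (c • X) :=
  fun w => by simp [hX w]

theorem comp_right (hX : IsSynthesis V x X) (u : List ι) :
    IsSynthesis V (wordOp V u x) (X.comp (Fock.right u).toContinuousLinearMap) := fun w => by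
  rw [ContinuousLinearMap.comp_apply, LinearIsometry.coe_toContinuousLinearMap, Fock.right_vec,
    hX, wordOp_append_apply]

theorem apply_left (hX : IsSynthesis V x X) (a : ι) (f : Fock ι) :
    X (Fock.left a f) = V a (X f) := by
  have : X.comp (Fock.left a).toContinuousLinearMap = (V a).comp X :=
    Fock.clm_ext fun w => by simp [Fock.left_vec, hX _, wordOp_cons_apply]
  exact congrArg (fun A : Fock ι →L[ℂ] H => A f) this

theorem apply_mem (hX : IsSynthesis V x X) {M : Submodule ℂ H} (hM : IsClosed (M : Set H))
    (hMV : ∀ a, ∀ x ∈ M, V a x ∈ M) (hx : x ∈ M) (f : Fock ι) : X f ∈ M := by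
  refine hM.mem_of_tendsto ((Fock.hasSum_vec f).mapL X) (Filter.Eventually.of_forall fun F => ?_)
  refine M.sum_mem fun w _ => ?_
  rw [map_smul, hX]
  exact M.smul_mem _ (wordOp_mem V hMV w hx)

variable [CompleteSpace H]

theorem inner_vec_adjoint (hX : IsSynthesis V x X) (w : List ι) (y : H) :
    ⟪Fock.vec w, adjoint X y⟫ = ⟪wordOp V w x, y⟫ := by
  rw [adjoint_inner_right, hX]

theorem norm_inner_le (hX : IsSynthesis V x X) (w : List ι) (y : H) :
    ‖⟪y, wordOp V w x⟫‖ ≤ ‖adjoint X y‖ := by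
  rw [norm_inner_symm, ← hX.inner_vec_adjoint]
  simpa [Fock.norm_vec] using norm_inner_le_norm (𝕜 := ℂ) (Fock.vec w) (adjoint X y)

theorem adjoint_star_apply (hX : IsSynthesis V x X) (a : ι) (y : H) :
    adjoint X (star (V a) y) =
      adjoint (Fock.left a).toContinuousLinearMap (adjoint X y) := by
  refine Fock.ext_inner fun w => ?_
  rw [hX.inner_vec_adjoint, inner_star_apply, ← wordOp_cons_apply, adjoint_inner_right,
    LinearIsometry.coe_toContinuousLinearMap, Fock.left_vec, hX.inner_vec_adjoint]

theorem adjoint_apply (hV : IsRowIsometry V) (hX : IsSynthesis V x X) (a : ι) (y : H) :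
    adjoint X (V a y) = Fock.left a (adjoint X y) + ⟪x, V a y⟫ • Fock.vec [] := by
  refine Fock.ext_inner fun w => ?_
  rw [hX.inner_vec_adjoint, inner_add_right, inner_smul_right]
  cases w with
  | nil => simp [Fock.inner_vec_nil_left, Fock.norm_vec]
  | cons b w =>
    rw [Fock.inner_vec_cons_left, Fock.inner_vec_vec, wordOp_cons_apply]
    rcases eq_or_ne a b with rfl | hab
    · simp [hV.inner_self, hX.inner_vec_adjoint]
    · simp [hV.inner_of_ne hab.symm, hab]

theorem norm_adjoint_apply_le (hV : IsRowIsometry V) (hX : IsSynthesis V x X) (a : ι) (y : H) :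
    ‖adjoint X (V a y)‖ ≤ ‖adjoint X y‖ + ‖⟪x, V a y⟫‖ := by
  rw [hX.adjoint_apply hV]
  refine (norm_add_le _ _).trans ?_
  rw [LinearIsometry.norm_map, norm_smul, Fock.norm_vec, mul_one]

theorem norm_adjoint_replicate_le (hV : IsRowIsometry V) (hX : IsSynthesis V x X) {a : ι}
    (hx : star (V a) x = 0) (k : ℕ) (y : H) :
    ‖adjoint X (wordOp V (List.replicate k a) y)‖ ≤ ‖adjoint X y‖ := by
  induction k with
  | zero => simp
  | succ k ih =>
    rw [List.replicate_succ, wordOp_cons_apply]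
    refine (hX.norm_adjoint_apply_le hV a _).trans ?_
    rw [norm_inner_symm, ← inner_star_apply, hx]
    simpa using ih

end IsSynthesis

variable [CompleteSpace H]

theorem IsWandering.exists_isSynthesis {ζ : H} (hζ : IsWandering V ζ) :
    ∃ X : Fock ι →ₗᵢ[ℂ] H, IsSynthesis V ζ X.toContinuousLinearMap :=
  have h : Orthonormal ℂ fun w => wordOp V w ζ := orthonormal_iff_ite.2 hζ.2
  ⟨Fock.ofOrthonormal h, Fock.ofOrthonormal_vec h⟩

end Synthesis

section Approximation

open ContinuousLinearMap

variable {H : Type*} [NormedAddCommGroup H] [InnerProductSpace ℂ H] [CompleteSpace H]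
  {ι : Type*} {V : ι → H →L[ℂ] H} {x : H} {X : Fock ι →L[ℂ] H}

theorem sum_apply_star_apply [Fintype ι] (hC : ∑ a, V a * star (V a) = 1) (y : H) :
    ∑ a, V a (star (V a) y) = y := by
  have := congrArg (fun A : H →L[ℂ] H => A y) hC
  simpa using this

theorem sum_norm_star_sq [Fintype ι] (hC : ∑ a, V a * star (V a) = 1) (y : H) :
    ∑ a, ‖star (V a) y‖ ^ 2 = ‖y‖ ^ 2 := by
  have h : ⟪y, y⟫ = ∑ a, ⟪star (V a) y, star (V a) y⟫ := by
    conv_lhs => rw [← sum_apply_star_apply hC y, sum_inner]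
    refine Finset.sum_congr rfl fun a _ => ?_
    rw [sum_apply_star_apply hC, inner_star_apply]
  simp only [inner_self_eq_norm_sq_to_K] at h
  exact Complex.ofReal_injective (by simpa using h.symm)

/-- The adjoint of a synthesis operator is not bounded below on a nonzero reducing subspace. -/
theorem exists_norm_adjoint_le [Fintype ι] (hC : ∑ a, V a * star (V a) = 1)
    {M : Submodule ℂ H} (hMs : ∀ a, ∀ x ∈ M, star (V a) x ∈ M)
    (hMb : M ≤ (boundedVectors V ⊓ M).topologicalClosure) (hM0 : M ≠ ⊥)
    (hX : IsSynthesis V x X) {δ : ℝ} (hδ : 0 < δ) :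
    ∃ q ∈ M, q ∈ boundedVectors V ∧ ‖q‖ = 1 ∧ ‖adjoint X q‖ ≤ δ := by
  by_contra! hcon
  have h1 : ∀ y ∈ boundedVectors V ⊓ M, δ * ‖y‖ ≤ ‖adjoint X y‖ := by
    intro y hy
    rcases eq_or_ne y 0 with rfl | hy0
    · simp
    have hn : 0 < ‖y‖ := norm_pos_iff.2 hy0
    have := hcon ((‖y‖⁻¹ : ℂ) • y) (M.smul_mem _ hy.2) (Submodule.smul_mem _ _ hy.1)
      (by rw [norm_smul]; simp [hy0])
    rw [map_smul, norm_smul] at this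
    have h2 : ‖(‖y‖⁻¹ : ℂ)‖ = ‖y‖⁻¹ := by simp
    rw [h2, inv_mul_eq_div, lt_div_iff₀ hn] at this
    exact this.le
  have h2 : ∀ y ∈ M, δ * ‖y‖ ≤ ‖adjoint X y‖ := by
    intro y hy
    have hc : IsClosed {y : H | δ * ‖y‖ ≤ ‖adjoint X y‖} :=
      isClosed_le (by fun_prop) (by fun_prop)
    exact closure_minimal h1 hc (hMb hy)
  have h3 : ∀ r, ∀ y ∈ M, δ ^ 2 * ‖y‖ ^ 2 ≤ Fock.tail r (adjoint X y) := by
    intro r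
    induction r with
    | zero =>
      intro y hy
      rw [← mul_pow]
      exact pow_le_pow_left₀ (by positivity) (h2 y hy) 2
    | succ r ih =>
      intro y hy
      rw [← sum_norm_star_sq hC y, Finset.mul_sum]
      refine Finset.sum_le_sum fun a _ => ?_
      rw [← hX.adjoint_star_apply]
      exact ih _ (hMs a y hy)
  obtain ⟨y, hy, hy0⟩ := M.ne_bot_iff.1 hM0
  have hn : 0 < ‖y‖ := norm_pos_iff.2 hy0
  obtain ⟨r, hr⟩ := Fock.exists_tail_le (adjoint X y) (show 0 < δ ^ 2 * ‖y‖ ^ 2 / 2 by positivity)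
  have := h3 r y hy
  have : 0 < δ ^ 2 * ‖y‖ ^ 2 := by positivity
  linarith

namespace IsRowIsometry

theorem inner_replicate_eq_zero (hV : IsRowIsometry V) {a b : ι} (hab : a ≠ b) (y z : H)
    (v : List ι) (k : ℕ) (h : v.length < k) :
    ⟪wordOp V (List.replicate k b) y, wordOp V v (V a z)⟫ = 0 := by
  induction v generalizing k with
  | nil =>
    obtain ⟨k, rfl⟩ := Nat.exists_eq_succ_of_ne_zero h.ne'
    rw [List.replicate_succ, wordOp_cons_apply]
    exact hV.inner_of_ne hab.symm _ _
  | cons c v ih =>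
    obtain ⟨k, rfl⟩ := Nat.exists_eq_succ_of_ne_zero (Nat.ne_zero_of_lt h)
    rw [List.replicate_succ, wordOp_cons_apply, wordOp_cons_apply]
    rcases eq_or_ne b c with rfl | hbc
    · rw [hV.inner_self]
      exact ih k (by simpa using h)
    · exact hV.inner_of_ne hbc _ _

/-- The word `a b^k` does not overlap itself. -/
theorem inner_cons_replicate_eq_zero (hV : IsRowIsometry V) {a b : ι} (hab : a ≠ b) (q : H)
    (c : ι) (v : List ι) (k : ℕ) (h : v.length < k) :
    ⟪wordOp V (a :: List.replicate k b) q,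
      wordOp V (c :: v) (wordOp V (a :: List.replicate k b) q)⟫ = 0 := by
  rw [wordOp_cons_apply, wordOp_cons_apply]
  rcases eq_or_ne a c with rfl | hac
  · rw [hV.inner_self]
    exact hV.inner_replicate_eq_zero hab _ _ v k h
  · exact hV.inner_of_ne hac _ _

theorem norm_adjoint_wordOp_le (hV : IsRowIsometry V) {a b : ι} (hX : IsSynthesis V x X)
    (hx : star (V b) x = 0) {q : H} {k : ℕ} {P : Fock ι →L[ℂ] H}
    (hP : IsSynthesis V (wordOp V (a :: List.replicate k b) q) P) (v : List ι) :
    ‖adjoint X (wordOp V v (wordOp V (a :: List.replicate k b) q))‖ ≤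
      ‖adjoint X q‖ + (v.length + 1) * ‖adjoint P x‖ := by
  induction v with
  | nil =>
    have h1 := hP.norm_inner_le [] x
    have h2 := hX.norm_adjoint_replicate_le hV hx k q
    have h3 := hX.norm_adjoint_apply_le hV a (wordOp V (List.replicate k b) q)
    rw [← wordOp_cons_apply] at h3
    simp at h1 ⊢
    linarith
  | cons c v ih =>
    have h1 := hP.norm_inner_le (c :: v) x
    have h3 := hX.norm_adjoint_apply_le hV c
      (wordOp V v (wordOp V (a :: List.replicate k b) q))
    rw [← wordOp_cons_apply] at h3
    simp only [List.length_cons]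
    push_cast
    linarith

theorem norm_adjoint_sub_vec_le (hV : IsRowIsometry V) {a b : ι} (hab : a ≠ b) {q : H}
    (hq : ‖q‖ = 1) {k : ℕ} {P : Fock ι →L[ℂ] H}
    (hP : IsSynthesis V (wordOp V (a :: List.replicate k b) q) P) (v : List ι)
    (hv : v.length ≤ k) :
    ‖adjoint P (wordOp V v (wordOp V (a :: List.replicate k b) q)) - Fock.vec v‖ ≤
      ‖adjoint P q‖ := by
  induction v with
  | nil =>
    have h0 : star (V b) (wordOp V (a :: List.replicate k b) q) = 0 := by
      rw [wordOp_cons_apply, hV.star_apply_of_ne hab.symm]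
    have h2 := hP.norm_adjoint_replicate_le hV h0 k q
    have h3 := hP.adjoint_apply hV a (wordOp V (List.replicate k b) q)
    rw [← wordOp_cons_apply, inner_self_eq_norm_sq_to_K, hV.norm_wordOp, hq] at h3
    rw [wordOp_nil, one_apply_eq_self, h3]
    simpa using h2
  | cons c v ih =>
    have h3 := hP.adjoint_apply hV c (wordOp V v (wordOp V (a :: List.replicate k b) q))
    rw [← wordOp_cons_apply, hV.inner_cons_replicate_eq_zero hab q c v k (by simpa using hv)] at h3
    rw [h3, zero_smul, add_zero, ← Fock.left_vec, ← map_sub, LinearIsometry.norm_map]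
    exact ih (by simp at hv; omega)

end IsRowIsometry

end Approximation

section Density

open ContinuousLinearMap Filter Topology

variable {H : Type*} [NormedAddCommGroup H] [InnerProductSpace ℂ H] [CompleteSpace H]
  {ι : Type*} [Fintype ι] {V : ι → H →L[ℂ] H}

set_option maxHeartbeats 1000000 in
/-- One step of the successive approximation of a biorthogonal pair. -/
theorem exists_improved_pair (hV : IsRowIsometry V) (hC : ∑ a, V a * star (V a) = 1)
    {M : Submodule ℂ H} (hMV : ∀ a, ∀ x ∈ M, V a x ∈ M)
    (hMs : ∀ a, ∀ x ∈ M, star (V a) x ∈ M)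
    (hMb : M ≤ (boundedVectors V ⊓ M).topologicalClosure) (hM0 : M ≠ ⊥)
    {a b : ι} (hab : a ≠ b) {x y : H} {X : Fock ι →L[ℂ] H} (hX : IsSynthesis V x X)
    (hxM : x ∈ M) (hyM : y ∈ M) (hx : star (V b) x = 0) {s : ℝ} (hs : 0 < s)
    (hxy : ‖Fock.vec [] - adjoint X y‖ ≤ s ^ 2) {η : ℝ} (hη : 0 < η) :
    ∃ x' ∈ M, ∃ y' ∈ M, ∃ X', IsSynthesis V x' X' ∧ star (V b) x' = 0 ∧
      ‖Fock.vec [] - adjoint X' y'‖ ≤ η ∧ ‖x' - x‖ ≤ s ∧ ‖y' - y‖ ≤ 3 * s := by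
  set h : Fock ι := Fock.vec [] - adjoint X y with hh
  obtain ⟨F, hF⟩ := Fock.exists_finset_norm_sub_lt h (lt_min (half_pos hη) (pow_pos hs 2))
  set g : Fock ι := ∑ v ∈ F, h v • Fock.vec v with hg
  have hF1 : ‖h - g‖ ≤ η / 2 := hF.le.trans (min_le_left _ _)
  have hF2 : ‖h - g‖ ≤ s ^ 2 := hF.le.trans (min_le_right _ _)
  have hgn : ‖g‖ ≤ 2 * s ^ 2 := by
    have := norm_sub_le h (h - g)
    rw [sub_sub_cancel] at this
    linarith
  set C : ℝ := ∑ v ∈ F, ‖h v‖ * (v.length + 2) with hCdef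
  have hC0 : 0 ≤ C := Finset.sum_nonneg fun v _ => by positivity
  set D : ℝ := s⁻¹ * C + s + C with hD
  have hD0 : 0 < D := by positivity
  set δ : ℝ := min (η / 2) (s ^ 2) / D with hδ
  have hδ0 : 0 < δ := div_pos (lt_min (half_pos hη) (pow_pos hs 2)) hD0
  have hδ1 : δ * D ≤ η / 2 := by
    rw [hδ, div_mul_cancel₀ _ hD0.ne']; exact min_le_left _ _
  have hδ2 : δ * D ≤ s ^ 2 := by
    rw [hδ, div_mul_cancel₀ _ hD0.ne']; exact min_le_right _ _
  have hCδ : C * δ ≤ s ^ 2 := by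
    have : C ≤ D := by rw [hD]; nlinarith [mul_nonneg (inv_pos.2 hs).le hC0]
    nlinarith
  obtain ⟨q, hqM, ⟨Q, hQ⟩, hq1, hqX⟩ := exists_norm_adjoint_le hC hMs hMb hM0 hX hδ0
  obtain ⟨N₁, hN₁⟩ := Fock.exists_norm_adjoint_right_le (adjoint Q x) hδ0
  obtain ⟨N₂, hN₂⟩ := Fock.exists_norm_adjoint_right_le (adjoint Q y) hδ0
  obtain ⟨N₃, hN₃⟩ := Fock.exists_norm_adjoint_right_le (adjoint Q q) hδ0
  set k : ℕ := N₁ + N₂ + N₃ + F.sup List.length with hk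
  set u : List ι := a :: List.replicate k b with hu
  have hlen : u.length = k + 1 := by simp [hu]
  set p : H := wordOp V u q with hp
  set P : Fock ι →L[ℂ] H := Q.comp (Fock.right u).toContinuousLinearMap with hPdef
  have hP : IsSynthesis V p P := hQ.comp_right u
  have hPadj : ∀ z, adjoint P z = adjoint (Fock.right u).toContinuousLinearMap (adjoint Q z) :=
    fun z => by rw [hPdef, adjoint_comp]; rfl
  have hPx : ‖adjoint P x‖ ≤ δ := by rw [hPadj]; exact hN₁ u (by omega)
  have hPy : ‖adjoint P y‖ ≤ δ := by rw [hPadj]; exact hN₂ u (by omega)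
  have hPq : ‖adjoint P q‖ ≤ δ := by rw [hPadj]; exact hN₃ u (by omega)
  have hpM : p ∈ M := wordOp_mem V hMV u hqM
  have hp1 : ‖p‖ = 1 := by rw [hp, hV.norm_wordOp, hq1]
  have hpb : star (V b) p = 0 := by
    rw [hp, hu, wordOp_cons_apply, hV.star_apply_of_ne hab.symm]
  set Y : H := ∑ v ∈ F, h v • wordOp V v p with hY
  have hYM : Y ∈ M := M.sum_mem fun v _ => M.smul_mem _ (wordOp_mem V hMV v hpM)
  have hYP : P g = Y := by simp only [hg, hY, map_sum, map_smul, hP _]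
  have hXY : ‖adjoint X Y‖ ≤ C * δ := by
    rw [hY, map_sum, hCdef, Finset.sum_mul]
    refine norm_sum_le_of_le _ fun v _ => ?_
    rw [map_smul, norm_smul, mul_assoc]
    refine mul_le_mul_of_nonneg_left ?_ (norm_nonneg _)
    refine (hV.norm_adjoint_wordOp_le hX hx hP v).trans ?_
    nlinarith [Nat.cast_nonneg (α := ℝ) v.length]
  have hPY : ‖adjoint P Y - g‖ ≤ C * δ := by
    rw [hY, hg, map_sum, ← Finset.sum_sub_distrib, hCdef, Finset.sum_mul]
    refine norm_sum_le_of_le _ fun v hv => ?_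
    rw [map_smul, ← smul_sub, norm_smul, mul_assoc]
    refine mul_le_mul_of_nonneg_left ?_ (norm_nonneg _)
    have hvk : v.length ≤ k := (Finset.le_sup (f := List.length) hv).trans (by omega)
    refine (hV.norm_adjoint_sub_vec_le hab hq1 hP v hvk).trans (hPq.trans ?_)
    nlinarith [Nat.cast_nonneg (α := ℝ) v.length]
  have hPY' : ‖adjoint P Y‖ ≤ 3 * s ^ 2 := by
    have := norm_add_le (adjoint P Y - g) g
    rw [sub_add_cancel] at this
    linarith
  have hYn : ‖Y‖ ≤ 3 * s ^ 2 := by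
    have h1 : ‖Y‖ ^ 2 ≤ ‖g‖ * ‖adjoint P Y‖ := by
      have h2 : ⟪Y, Y⟫ = ⟪g, adjoint P Y⟫ := by
        rw [adjoint_inner_right, hYP]
      have h3 := norm_inner_le_norm (𝕜 := ℂ) g (adjoint P Y)
      rw [← h2, inner_self_eq_norm_sq_to_K] at h3
      simpa using h3
    refine (sq_le_sq₀ (norm_nonneg _) (by positivity)).1 ?_
    calc ‖Y‖ ^ 2 ≤ ‖g‖ * ‖adjoint P Y‖ := h1
      _ ≤ (2 * s ^ 2) * (3 * s ^ 2) := by gcongr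
      _ ≤ (3 * s ^ 2) ^ 2 := by nlinarith [sq_nonneg (s ^ 2)]
  have hsn : ‖(s : ℂ)‖ = s := by simp [hs.le]
  have hsn' : ‖((s : ℂ)⁻¹)‖ = s⁻¹ := by rw [norm_inv, hsn]
  have hs0 : (s : ℂ) ≠ 0 := by exact_mod_cast hs.ne'
  refine ⟨x + (s : ℂ) • p, M.add_mem hxM (M.smul_mem _ hpM), y + (s : ℂ)⁻¹ • Y,
    M.add_mem hyM (M.smul_mem _ hYM), X + (s : ℂ) • P, hX.add (hP.smul _), ?_, ?_, ?_, ?_⟩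
  · simp [hx, hpb]
  · have hdecomp : Fock.vec [] - adjoint (X + (s : ℂ) • P) (y + (s : ℂ)⁻¹ • Y) =
        (h - g) - (s : ℂ)⁻¹ • adjoint X Y - (s : ℂ) • adjoint P y - (adjoint P Y - g) := by
      have : adjoint (X + (s : ℂ) • P) = adjoint X + (s : ℂ) • adjoint P := by
        rw [map_add, map_smulₛₗ]; simp
      rw [this, add_apply, smul_apply, map_add, map_add,
        map_smul, map_smul, smul_add, smul_smul, mul_inv_cancel₀ hs0, one_smul, hh]
      abel
    rw [hdecomp]
    have e1 := norm_sub_le ((h - g) - (s : ℂ)⁻¹ • adjoint X Y - (s : ℂ) • adjoint P y)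
      (adjoint P Y - g)
    have e2 := norm_sub_le ((h - g) - (s : ℂ)⁻¹ • adjoint X Y) ((s : ℂ) • adjoint P y)
    have e3 := norm_sub_le (h - g) ((s : ℂ)⁻¹ • adjoint X Y)
    rw [norm_smul, hsn] at e2
    rw [norm_smul, hsn'] at e3
    have e4 : s⁻¹ * ‖adjoint X Y‖ ≤ s⁻¹ * (C * δ) :=
      mul_le_mul_of_nonneg_left hXY (inv_pos.2 hs).le
    have e5 : s * ‖adjoint P y‖ ≤ s * δ := mul_le_mul_of_nonneg_left hPy hs.le
    have e6 : δ * D = s⁻¹ * (C * δ) + s * δ + C * δ := by rw [hD]; ring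
    linarith
  · rw [add_sub_cancel_left, norm_smul, hsn, hp1, mul_one]
  · rw [add_sub_cancel_left, norm_smul, hsn', inv_mul_le_iff₀ hs]
    linarith [hYn]

/-- In a reducing subspace with densely many bounded vectors there is a wandering vector. -/
theorem exists_isWandering (hV : IsRowIsometry V) (hC : ∑ a, V a * star (V a) = 1)
    {a b : ι} (hab : a ≠ b)
    {M : Submodule ℂ H} (hM : IsClosed (M : Set H)) (hMV : ∀ a, ∀ x ∈ M, V a x ∈ M)
    (hMs : ∀ a, ∀ x ∈ M, star (V a) x ∈ M)
    (hMb : M ≤ (boundedVectors V ⊓ M).topologicalClosure) (hM0 : M ≠ ⊥) :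
    ∃ ζ ∈ M, IsWandering V ζ := by
  obtain ⟨x, hxM, y, hxy⟩ : ∃ x ∈ M, ∃ y, ∀ w, ⟪wordOp V w x, y⟫ = if w = [] then 1 else 0 := by
    let Q : ℕ → H × H → Prop := fun n z => z.1 ∈ M ∧ z.2 ∈ M ∧ star (V b) z.1 = 0 ∧
      ∃ X, IsSynthesis V z.1 X ∧ ‖Fock.vec [] - adjoint X z.2‖ ≤ ((1 / 2 : ℝ) ^ n) ^ 2
    have hstep : ∀ n z, Q n z → ∃ z', Q (n + 1) z' ∧ dist z z' ≤ 3 * (1 / 2 : ℝ) ^ n := by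
      rintro n ⟨x, y⟩ ⟨hxM, hyM, hx, X, hX, hXy⟩
      obtain ⟨x', hx'M, y', hy'M, X', hX', hx', hXy', h1, h2⟩ :=
        exists_improved_pair hV hC hMV hMs hMb hM0 hab hX hxM hyM hx
          (show 0 < (1 / 2 : ℝ) ^ n by positivity) hXy
          (show 0 < ((1 / 2 : ℝ) ^ (n + 1)) ^ 2 by positivity)
      refine ⟨(x', y'), ⟨hx'M, hy'M, hx', X', hX', hXy'⟩, ?_⟩
      rw [dist_comm, Prod.dist_eq, dist_eq_norm, dist_eq_norm]
      have : 0 < (1 / 2 : ℝ) ^ n := by positivity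
      exact max_le (by dsimp only; linarith) h2
    choose! next hnext hdist using hstep
    let f : ℕ → H × H := fun n => Nat.rec (0, 0) (fun n z => next n z) n
    have hf : ∀ n, Q n (f n) := by
      intro n
      induction n with
      | zero => exact ⟨M.zero_mem, M.zero_mem, map_zero _, 0, IsSynthesis.zero, by
          simp [f, Fock.norm_vec]⟩
      | succ n ih => exact hnext n _ ih
    have hcauchy : CauchySeq f := cauchySeq_of_le_geometric (1 / 2) 3 (by norm_num)
      fun n => hdist n _ (hf n)
    obtain ⟨z, hz⟩ := cauchySeq_tendsto_of_complete hcauchy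
    have hz1 : Tendsto (fun n => (f n).1) atTop (𝓝 z.1) := (continuous_fst.tendsto z).comp hz
    have hz2 : Tendsto (fun n => (f n).2) atTop (𝓝 z.2) := (continuous_snd.tendsto z).comp hz
    refine ⟨z.1, hM.mem_of_tendsto hz1 (Eventually.of_forall fun n => (hf n).1), z.2, fun w => ?_⟩
    have hl1 : Tendsto (fun n => ⟪wordOp V w (f n).1, (f n).2⟫) atTop
        (𝓝 ⟪wordOp V w z.1, z.2⟫) :=
      (((wordOp V w).continuous.tendsto _).comp hz1).inner hz2
    refine tendsto_nhds_unique hl1 ?_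
    rw [tendsto_iff_dist_tendsto_zero]
    refine squeeze_zero (g := fun n => ((1 / 2 : ℝ) ^ n) ^ 2) (fun _ => dist_nonneg) ?_ ?_
    · intro n
      obtain ⟨-, -, -, X, hX, hXy⟩ := hf n
      refine le_trans ?_ hXy
      rw [dist_comm, dist_eq_norm, ← hX.inner_vec_adjoint, ← Fock.inner_vec_vec,
        ← inner_sub_right]
      simpa [Fock.norm_vec] using norm_inner_le_norm (𝕜 := ℂ) (Fock.vec w)
        (Fock.vec [] - adjoint X (f n).2)
    · have := (tendsto_pow_atTop_nhds_zero_of_lt_one (r := (1 / 2 : ℝ)) (by norm_num)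
        (by norm_num)).pow 2
      simpa using this
  let K : Submodule ℂ H :=
    (Submodule.span ℂ {z | ∃ w ≠ [], z = wordOp V w x}).topologicalClosure
  have hKc : IsClosed (K : Set H) := Submodule.isClosed_topologicalClosure _
  have : CompleteSpace K := hKc.completeSpace_coe
  have hKx : ∀ w ≠ [], wordOp V w x ∈ K := fun w hw =>
    Submodule.le_topologicalClosure _ (Submodule.subset_span ⟨w, hw, rfl⟩)
  have hKle : ∀ N : Submodule ℂ H, IsClosed (N : Set H) → (∀ w ≠ [], wordOp V w x ∈ N) →
      K ≤ N := fun N hN h => Submodule.topologicalClosure_minimal _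
    (Submodule.span_le.2 (by rintro _ ⟨w, hw, rfl⟩; exact h w hw)) hN
  have hKM : K ≤ M := hKle M hM fun w _ => wordOp_mem V hMV w hxM
  have hKV : ∀ w, ∀ z ∈ K, wordOp V w z ∈ K := fun w => by
    have : K ≤ K.comap (wordOp V w : H →ₗ[ℂ] H) :=
      hKle _ (hKc.preimage (wordOp V w).continuous) fun w' hw' => by
        change wordOp V w (wordOp V w' x) ∈ K
        rw [← wordOp_append_apply]
        exact hKx _ (by simp [hw'])
    exact this
  have hKy : ∀ z ∈ K, ⟪z, y⟫ = 0 := by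
    have : K ≤ (Submodule.span ℂ {y})ᗮ := hKle _ (Submodule.isClosed_orthogonal _) fun w hw => by
      rw [Submodule.mem_orthogonal_singleton_iff_inner_left, hxy, if_neg hw]
    intro z hz
    exact (Submodule.mem_orthogonal_singleton_iff_inner_left).1 (this hz)
  set x₁ := K.starProjection x
  have hx₁ : x₁ ∈ K := Submodule.starProjection_apply_mem _ _
  have hξo : x - x₁ ∈ Kᗮ := Submodule.sub_starProjection_mem_orthogonal _
  have hξ0 : x - x₁ ≠ 0 := by
    intro h0
    have h1 := hxy []
    rw [wordOp_nil, one_apply_eq_self, sub_eq_zero.1 h0, hKy _ hx₁] at h1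
    simp at h1
  have hξM : x - x₁ ∈ M := M.sub_mem hxM (hKM hx₁)
  refine ⟨_, M.smul_mem _ hξM, hV.isWandering_smul hξ0 fun w hw => ?_⟩
  refine (Submodule.mem_orthogonal _ _).1 hξo _ ?_
  rw [map_sub]
  exact K.sub_mem (hKx w hw) (hKV w _ hx₁)

theorem le_wanderingSpan_of_antilipschitz (hV : IsRowIsometry V)
    (hC : ∑ a, V a * star (V a) = 1) {M : Submodule ℂ H} (hM : IsClosed (M : Set H))
    (hMV : ∀ a, ∀ x ∈ M, V a x ∈ M) {x : H} (hx : x ∈ M) {X : Fock ι →L[ℂ] H}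
    (hX : IsSynthesis V x X) {c : NNReal} (hc : AntilipschitzWith c X) :
    x ∈ wanderingSpan V M := by
  let K : Submodule ℂ H := LinearMap.range (X : Fock ι →ₗ[ℂ] H)
  have hmem : ∀ z, z ∈ K ↔ ∃ f, X f = z := fun z => by simp [K]
  have hKset : (K : Set H) = Set.range X := by ext z; simp [hmem]
  have hKc : IsClosed (K : Set H) := by
    rw [hKset]; exact hc.isClosed_range X.uniformContinuous
  have hKV : ∀ a, ∀ z ∈ K, V a z ∈ K := by
    intro a z hz
    obtain ⟨f, rfl⟩ := (hmem z).1 hz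
    exact (hmem _).2 ⟨Fock.left a f, hX.apply_left a f⟩
  have hKs : ∀ z, (∀ a, star (V a) z ∈ K) → z ∈ K := by
    intro z hz
    rw [← sum_apply_star_apply hC z]
    exact K.sum_mem fun a _ => hKV a _ (hz a)
  have hzero : ∀ w, ∀ f, (∀ v, star (wordOp V v) (X f) ∈ K) → ⟪Fock.vec w, f⟫ = 0 := by
    intro w
    induction w with
    | nil =>
      intro f hf
      choose g hg using fun a => (hmem _).1 (by simpa [wordOp] using hf [a])
      have hfg : f = ∑ a, Fock.left a (g a) := by
        refine hc.injective ?_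
        rw [map_sum]
        simp only [hX.apply_left, hg]
        exact (sum_apply_star_apply hC _).symm
      rw [hfg, inner_sum]
      exact Finset.sum_eq_zero fun a _ => Fock.inner_vec_nil_left a _
    | cons b w ih =>
      intro f hf
      choose g hg using fun a => (hmem _).1 (by simpa [wordOp] using hf [a])
      have hfg : f = ∑ a, Fock.left a (g a) := by
        refine hc.injective ?_
        rw [map_sum]
        simp only [hX.apply_left, hg]
        exact (sum_apply_star_apply hC _).symm
      rw [hfg, inner_sum]
      refine Finset.sum_eq_zero fun a _ => ?_
      rw [Fock.inner_vec_cons_left]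
      split_ifs
      · refine ih _ fun v => ?_
        rw [hg]
        have := hf (a :: v)
        rwa [wordOp_cons, star_mul] at this
      · rfl
  have hle : K ≤ wanderingSpan V K := le_wanderingSpan hV hKc hKV hKs fun z hz => by
    obtain ⟨f, rfl⟩ := (hmem z).1 (by simpa using hz [])
    have : f = 0 := Fock.ext_inner fun w => by rw [hzero w f hz, inner_zero_right]
    rw [this, map_zero]
  have hKM : K ≤ M := fun z hz => by
    obtain ⟨f, rfl⟩ := (hmem z).1 hz
    exact hX.apply_mem hM hMV hx f
  exact wanderingSpan_mono hKM (hle ((hmem x).2 ⟨Fock.vec [], by simpa using hX []⟩))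

/-- A reducing subspace in which the bounded vectors are dense is spanned by its wandering
vectors. -/
theorem le_wanderingSpan_of_boundedVectors_dense (hV : IsRowIsometry V)
    (hC : ∑ a, V a * star (V a) = 1) {a b : ι} (hab : a ≠ b)
    {M : Submodule ℂ H} (hM : IsClosed (M : Set H)) (hMV : ∀ a, ∀ x ∈ M, V a x ∈ M)
    (hMs : ∀ a, ∀ x ∈ M, star (V a) x ∈ M)
    (hMb : M ≤ (boundedVectors V ⊓ M).topologicalClosure) (hM0 : M ≠ ⊥) :
    M ≤ wanderingSpan V M := by
  obtain ⟨ζ, hζM, hζ⟩ := exists_isWandering hV hC hab hM hMV hMs hMb hM0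
  obtain ⟨X₀, hX₀⟩ := hζ.exists_isSynthesis
  refine hMb.trans (Submodule.topologicalClosure_minimal _ ?_ (isClosed_wanderingSpan _ _))
  rintro z ⟨⟨Z, hZ⟩, hzM⟩
  set ε : ℝ := (2 * (‖Z‖ + 1))⁻¹ with hε
  have hε0 : 0 < ε := by positivity
  have hεZ : ε * ‖Z‖ ≤ 1 / 2 := by
    rw [hε, inv_mul_le_iff₀ (by positivity)]; linarith [norm_nonneg Z]
  have hεn : ‖(ε : ℂ)‖ = ε := by simp [hε0.le]
  have hX := hX₀.add (hZ.smul (ε : ℂ))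
  have hanti : AntilipschitzWith 2 (X₀.toContinuousLinearMap + (ε : ℂ) • Z) := by
    refine ContinuousLinearMap.antilipschitz_of_bound _ fun f => ?_
    have h1 : ‖f‖ ≤ ‖X₀ f + (ε : ℂ) • Z f‖ + ‖(ε : ℂ) • Z f‖ := by
      rw [← X₀.norm_map f]
      simpa using norm_sub_le (X₀ f + (ε : ℂ) • Z f) ((ε : ℂ) • Z f)
    have h2 : ‖(ε : ℂ) • Z f‖ ≤ 1 / 2 * ‖f‖ := by
      rw [norm_smul, hεn]
      calc ε * ‖Z f‖ ≤ ε * (‖Z‖ * ‖f‖) := by gcongr; exact Z.le_opNorm f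
        _ = (ε * ‖Z‖) * ‖f‖ := by ring
        _ ≤ _ := by gcongr
    have h3 : (X₀.toContinuousLinearMap + (ε : ℂ) • Z) f = X₀ f + (ε : ℂ) • Z f := rfl
    rw [h3]
    push_cast
    linarith
  have hmem := le_wanderingSpan_of_antilipschitz hV hC hM hMV
    (M.add_mem hζM (M.smul_mem _ hzM)) hX hanti
  have h4 := (wanderingSpan V M).sub_mem hmem (mem_wanderingSpan hζM hζ)
  rw [add_sub_cancel_left] at h4
  exact (Submodule.smul_mem_iff _ (by exact_mod_cast hε0.ne')).1 h4

end Density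

section DilationType

open ContinuousLinearMap

variable {H : Type*} [NormedAddCommGroup H] [InnerProductSpace ℂ H] [CompleteSpace H]
  {ι : Type*} [Fintype ι] {V : ι → H →L[ℂ] H}

theorem starProjection_comm {M : Submodule ℂ H} [CompleteSpace M] {A : H →L[ℂ] H}
    (hA : ∀ x ∈ M, A x ∈ M) (hAs : ∀ x ∈ M, star A x ∈ M) (x : H) :
    M.starProjection (A x) = A (M.starProjection x) := by
  refine Submodule.eq_starProjection_of_mem_orthogonal
    (hA _ (Submodule.starProjection_apply_mem _ _)) ?_
  rw [← map_sub, Submodule.mem_orthogonal]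
  intro y hy
  have : ⟪y, A (x - M.starProjection x)⟫ = ⟪star A y, x - M.starProjection x⟫ := by
    rw [← inner_star_apply, star_star]
  rw [this]
  exact (Submodule.mem_orthogonal _ _).1 (Submodule.sub_starProjection_mem_orthogonal _) _
    (hAs y hy)

/-- For a row-isometry of dilation type, the closed span of the wandering vectors contains no
nonzero vector whose backward orbit stays inside it. -/
theorem IsDilationType.eq_zero_of_star_wordOp_mem (hdil : IsDilationType V)
    (hV : IsRowIsometry V) {a b : ι} (hab : a ≠ b) {x : H}
    (hx : ∀ w, star (wordOp V w) x ∈ wanderingSpan V ⊤) : x = 0 := by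
  obtain ⟨hC, hno⟩ := hdil
  set W := wanderingSpan V ⊤ with hW
  have hWV : ∀ a, ∀ x ∈ W, V a x ∈ W := fun a x hx =>
    wanderingSpan_invariant hV (fun _ _ _ => Submodule.mem_top) a hx
  let M : Submodule ℂ H := ⨅ w, W.comap (star (wordOp V w) : H →L[ℂ] H).toLinearMap
  have hmem : ∀ y, y ∈ M ↔ ∀ w, star (wordOp V w) y ∈ W := fun y => by
    simp [M, Submodule.mem_iInf]
  have hMc : IsClosed (M : Set H) := by
    have : (M : Set H) = ⋂ w, (star (wordOp V w) : H →L[ℂ] H) ⁻¹' (W : Set H) := by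
      ext y; simp [hmem]
    rw [this]
    exact isClosed_iInter fun w =>
      (isClosed_wanderingSpan _ _).preimage (star (wordOp V w)).continuous
  have hMW : M ≤ W := fun y hy => by simpa using (hmem y).1 hy []
  have hMs : ∀ a, ∀ y ∈ M, star (V a) y ∈ M := by
    intro a y hy
    rw [hmem]
    intro w
    have := (hmem y).1 hy (a :: w)
    rwa [wordOp_cons, star_mul] at this
  have hMV : ∀ a, ∀ y ∈ M, V a y ∈ M := by
    intro a y hy
    rw [hmem]
    intro w
    cases w with
    | nil => simpa using hWV a y (hMW hy)
    | cons b w =>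
      rw [wordOp_cons, star_mul, mul_apply_eq_comp]
      rcases eq_or_ne b a with rfl | hba
      · rw [hV.star_apply_self]; exact (hmem y).1 hy w
      · rw [hV.star_apply_of_ne hba, map_zero]; exact W.zero_mem
  have : CompleteSpace M := hMc.completeSpace_coe
  have hMb : M ≤ (boundedVectors V ⊓ M).topologicalClosure := by
    have hWle : W ≤ (boundedVectors V ⊓ M).topologicalClosure.comap
        (M.starProjection : H →ₗ[ℂ] H) := by
      refine wanderingSpan_le
        ((Submodule.isClosed_topologicalClosure _).preimage M.starProjection.continuous) ?_
      intro ζ _ hζ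
      obtain ⟨X, hX⟩ := hζ.exists_isSynthesis
      refine Submodule.le_topologicalClosure _
        ⟨⟨M.starProjection.comp X.toContinuousLinearMap, fun w => ?_⟩,
          Submodule.starProjection_apply_mem _ _⟩
      rw [ContinuousLinearMap.comp_apply, hX]
      change M.starProjection (wordOp V w ζ) = wordOp V w (M.starProjection ζ)
      induction w with
      | nil => rfl
      | cons c w ih =>
        rw [wordOp_cons_apply, wordOp_cons_apply, starProjection_comm (hMV c) (hMs c), ih]
    intro y hy
    have := hWle (hMW hy)
    rwa [Submodule.mem_comap, ContinuousLinearMap.coe_coe,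
      Submodule.starProjection_eq_self_iff.2 hy] at this
  by_contra hx0
  have hM0 : M ≠ ⊥ := M.ne_bot_iff.2 ⟨x, (hmem x).2 hx, hx0⟩
  refine hno ⟨M, hM0, hMc, hMV, hMs, Or.inl (le_antisymm ?_ ?_)⟩
  · exact le_wanderingSpan_of_boundedVectors_dense hV hC hab hMc hMV hMs hMb hM0
  · exact wanderingSpan_le hMc fun ζ hζ _ => hζ

end DilationType

section TwoGraph

theorem IsRowIsometry.inner_wordOp_of_length_eq {H : Type*} [NormedAddCommGroup H]
    [InnerProductSpace ℂ H] [CompleteSpace H] {ι : Type*} {V : ι → H →L[ℂ] H}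
    (hV : IsRowIsometry V) {w w' : List ι} (h : w.length = w'.length) (x y : H) :
    ⟪wordOp V w x, wordOp V w' y⟫ = if w = w' then ⟪x, y⟫ else 0 := by
  induction w generalizing w' with
  | nil =>
    obtain rfl := List.length_eq_zero_iff.1 h.symm
    simp
  | cons a w ih =>
    cases w' with
    | nil => simp at h
    | cons b w' =>
      rw [wordOp_cons_apply, wordOp_cons_apply]
      rcases eq_or_ne a b with rfl | hab
      · rw [hV.inner_self, ih (by simpa using h)]; simp
      · rw [hV.inner_of_ne hab]; simp [hab]

namespace TwoGraphRep

variable {m n : ℕ} {θ : Equiv.Perm (Fin m × Fin n)} {H : Type*}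
  [NormedAddCommGroup H] [InnerProductSpace ℂ H] [CompleteSpace H] (ρ : TwoGraphRep m n θ H)

/-- `A` is one of the generating operators `S_u T_v` of degree `(a, b)`. -/
def HasDegree (a b : ℕ) (A : H →L[ℂ] H) : Prop :=
  ∃ u v, u.length = a ∧ v.length = b ∧ A = wordOp ρ.S u * wordOp ρ.T v

theorem isRowIsometry_S : IsRowIsometry ρ.S := fun a b => by
  rw [ρ.isometS]; split_ifs <;> rfl

theorem isRowIsometry_T : IsRowIsometry ρ.T := fun a b => by
  rw [ρ.isometT]; split_ifs <;> rfl

theorem T_mul_S (i : Fin m) (j : Fin n) :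
    ρ.T j * ρ.S i = ρ.S (θ.symm (i, j)).1 * ρ.T (θ.symm (i, j)).2 := by
  rw [ρ.comm]; simp

theorem T_mul_wordOp_S (j : Fin n) (u : List (Fin m)) :
    ∃ u' j', u'.length = u.length ∧ ρ.T j * wordOp ρ.S u = wordOp ρ.S u' * ρ.T j' := by
  induction u generalizing j with
  | nil => exact ⟨[], j, rfl, by simp⟩
  | cons i u ih =>
    obtain ⟨u', j', hl, h⟩ := ih (θ.symm (i, j)).2
    refine ⟨(θ.symm (i, j)).1 :: u', j', by simp [hl], ?_⟩
    rw [wordOp_cons, wordOp_cons, ← mul_assoc, T_mul_S, mul_assoc, h, mul_assoc]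

theorem wordOp_T_mul_wordOp_S (v : List (Fin n)) (u : List (Fin m)) :
    ∃ u' v', u'.length = u.length ∧ v'.length = v.length ∧
      wordOp ρ.T v * wordOp ρ.S u = wordOp ρ.S u' * wordOp ρ.T v' := by
  induction v with
  | nil => exact ⟨u, [], rfl, rfl, by simp⟩
  | cons j v ih =>
    obtain ⟨u', v', hu, hv, h⟩ := ih
    obtain ⟨u'', j', hu', h'⟩ := ρ.T_mul_wordOp_S j u'
    refine ⟨u'', j' :: v', by omega, by simp [hv], ?_⟩
    rw [wordOp_cons, wordOp_cons, mul_assoc, h, ← mul_assoc, h', mul_assoc]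

theorem S_mul_wordOp_T (i : Fin m) (v : List (Fin n)) :
    ∃ v' i', v'.length = v.length ∧ ρ.S i * wordOp ρ.T v = wordOp ρ.T v' * ρ.S i' := by
  induction v generalizing i with
  | nil => exact ⟨[], i, rfl, by simp⟩
  | cons j v ih =>
    obtain ⟨v', i', hl, h⟩ := ih (θ (i, j)).1
    refine ⟨(θ (i, j)).2 :: v', i', by simp [hl], ?_⟩
    rw [wordOp_cons, wordOp_cons, ← mul_assoc, ρ.comm, mul_assoc, h, mul_assoc]

theorem wordOp_S_mul_wordOp_T (u : List (Fin m)) (v : List (Fin n)) :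
    ∃ v' u', v'.length = v.length ∧ u'.length = u.length ∧
      wordOp ρ.S u * wordOp ρ.T v = wordOp ρ.T v' * wordOp ρ.S u' := by
  induction u with
  | nil => exact ⟨v, [], rfl, rfl, by simp⟩
  | cons i u ih =>
    obtain ⟨v', u', hv, hu, h⟩ := ih
    obtain ⟨v'', i', hv', h'⟩ := ρ.S_mul_wordOp_T i v'
    refine ⟨v'', i' :: u', by omega, by simp [hu], ?_⟩
    rw [wordOp_cons, wordOp_cons, mul_assoc, h, ← mul_assoc, h', mul_assoc]

namespace HasDegree

variable {ρ} {a b c d : ℕ} {A B : H →L[ℂ] H}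

theorem one : ρ.HasDegree 0 0 1 := ⟨[], [], rfl, rfl, by simp⟩

theorem eq_one (hA : ρ.HasDegree 0 0 A) : A = 1 := by
  obtain ⟨u, v, hu, hv, rfl⟩ := hA
  rw [List.length_eq_zero_iff.1 hu, List.length_eq_zero_iff.1 hv]; simp

theorem S (i : Fin m) : ρ.HasDegree 1 0 (ρ.S i) := ⟨[i], [], rfl, rfl, by simp [wordOp]⟩

theorem T (j : Fin n) : ρ.HasDegree 0 1 (ρ.T j) := ⟨[], [j], rfl, rfl, by simp [wordOp]⟩

theorem mul (hA : ρ.HasDegree a b A) (hB : ρ.HasDegree c d B) :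
    ρ.HasDegree (a + c) (b + d) (A * B) := by
  obtain ⟨u, v, hu, hv, rfl⟩ := hA
  obtain ⟨u', v', hu', hv', rfl⟩ := hB
  obtain ⟨u₁, v₁, hu₁, hv₁, h⟩ := ρ.wordOp_T_mul_wordOp_S v u'
  refine ⟨u ++ u₁, v₁ ++ v', by simp; omega, by simp; omega, ?_⟩
  rw [wordOp_append, wordOp_append, mul_assoc, ← mul_assoc (wordOp ρ.T v), h]
  simp only [mul_assoc]

theorem exists_mul_eq (hA : ρ.HasDegree (a + c) (b + d) A) :
    ∃ B C, ρ.HasDegree a b B ∧ ρ.HasDegree c d C ∧ A = B * C := by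
  obtain ⟨u, v, hu, hv, rfl⟩ := hA
  obtain ⟨v₁, u₁, hv₁, hu₁, h⟩ := ρ.wordOp_S_mul_wordOp_T (u.drop a) (v.take b)
  refine ⟨_, _, ⟨u.take a, v₁, by simp; omega, by simp at hv₁; omega, rfl⟩,
    ⟨u₁, v.drop b, by simp at hu₁; omega, by simp; omega, rfl⟩, ?_⟩
  conv_lhs => rw [← List.take_append_drop a u, ← List.take_append_drop b v]
  rw [wordOp_append, wordOp_append, mul_assoc, ← mul_assoc (wordOp ρ.S (u.drop a)), h]
  simp only [mul_assoc]

theorem norm_apply (hA : ρ.HasDegree a b A) (x : H) : ‖A x‖ = ‖x‖ := by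
  obtain ⟨u, v, -, -, rfl⟩ := hA
  rw [mul_apply_eq_comp, ρ.isRowIsometry_S.norm_wordOp, ρ.isRowIsometry_T.norm_wordOp]

end HasDegree

theorem inner_wordOp_mul {u u' : List (Fin m)} {v v' : List (Fin n)}
    (hu : u.length = u'.length) (hv : v.length = v'.length) (x y : H) :
    ⟪(wordOp ρ.S u * wordOp ρ.T v) x, (wordOp ρ.S u' * wordOp ρ.T v') y⟫ =
      if u = u' ∧ v = v' then ⟪x, y⟫ else 0 := by
  rw [mul_apply_eq_comp, mul_apply_eq_comp, ρ.isRowIsometry_S.inner_wordOp_of_length_eq hu,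
    ρ.isRowIsometry_T.inner_wordOp_of_length_eq hv]
  split_ifs <;> simp_all

theorem HasDegree.inner_eq_zero {ρ : TwoGraphRep m n θ H} {a b : ℕ} {A B : H →L[ℂ] H}
    (hA : ρ.HasDegree a b A) (hB : ρ.HasDegree a b B) {x y : H} (h : ⟪x, y⟫ = 0) :
    ⟪A x, B y⟫ = 0 := by
  obtain ⟨u, v, hu, hv, rfl⟩ := hA
  obtain ⟨u', v', hu', hv', rfl⟩ := hB
  rw [ρ.inner_wordOp_mul (hu.trans hu'.symm) (hv.trans hv'.symm), h, ite_self]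

variable (k l : ℕ)

theorem isRowIsometry_rowKL : IsRowIsometry (ρ.rowKL k l) := by
  intro p p'
  refine ContinuousLinearMap.ext fun x => ext_inner_left ℂ fun y => ?_
  rw [mul_apply_eq_comp, inner_star_apply]
  simp only [rowKL, fnWordOp]
  rw [ρ.inner_wordOp_mul (by simp) (by simp)]
  simp only [List.ofFn_inj, ← Prod.ext_iff]
  split_ifs <;> simp

theorem hasDegree_rowKL (p : (Fin k → Fin m) × (Fin l → Fin n)) :
    ρ.HasDegree k l (ρ.rowKL k l p) :=
  ⟨List.ofFn p.1, List.ofFn p.2, by simp, by simp, rfl⟩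

theorem hasDegree_wordOp_rowKL (w : List ((Fin k → Fin m) × (Fin l → Fin n))) :
    ρ.HasDegree (w.length * k) (w.length * l) (wordOp (ρ.rowKL k l) w) := by
  induction w with
  | nil => simpa using HasDegree.one
  | cons p w ih =>
    rw [wordOp_cons, List.length_cons, add_mul, add_mul, add_comm _ (1 * k), add_comm _ (1 * l),
      one_mul, one_mul]
    exact (ρ.hasDegree_rowKL k l p).mul ih

variable {ρ k l}

theorem HasDegree.exists_rowKL_eq {A : H →L[ℂ] H} (hA : ρ.HasDegree k l A) :
    ∃ p, ρ.rowKL k l p = A := by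
  obtain ⟨u, v, rfl, rfl, rfl⟩ := hA
  exact ⟨(u.get, v.get), by simp [rowKL, fnWordOp]⟩

theorem HasDegree.exists_wordOp_eq {r : ℕ} {A : H →L[ℂ] H}
    (hA : ρ.HasDegree (r * k) (r * l) A) :
    ∃ w : List _, w.length = r ∧ wordOp (ρ.rowKL k l) w = A := by
  induction r generalizing A with
  | zero =>
    rw [zero_mul, zero_mul] at hA
    exact ⟨[], rfl, by rw [hA.eq_one, wordOp_nil]⟩
  | succ r ih =>
    rw [add_mul, add_mul, add_comm _ (1 * k), add_comm _ (1 * l), one_mul, one_mul] at hA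
    obtain ⟨B, C, hB, hC, rfl⟩ := hA.exists_mul_eq
    obtain ⟨p, rfl⟩ := hB.exists_rowKL_eq
    obtain ⟨w, hw, rfl⟩ := ih hC
    exact ⟨p :: w, by simp [hw], wordOp_cons _ _ _⟩

theorem isWandering_rowKL_iff {ζ : H} : IsWandering (ρ.rowKL k l) ζ ↔
    ‖ζ‖ = 1 ∧ ∀ r, 0 < r → ∀ A, ρ.HasDegree (r * k) (r * l) A → ⟪A ζ, ζ⟫ = 0 := by
  rw [(ρ.isRowIsometry_rowKL k l).isWandering_iff]
  refine and_congr_right fun _ => ⟨fun h r hr A hA => ?_, fun h w hw => ?_⟩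
  · obtain ⟨w, hw, rfl⟩ := hA.exists_wordOp_eq
    exact h w (by rintro rfl; simp at hw; omega)
  · exact h w.length (List.length_pos_iff.2 hw) _ (ρ.hasDegree_wordOp_rowKL k l w)

theorem isWanderingKL_iff (hk : 0 < k) {ζ : H} :
    ρ.IsWanderingKL k l ζ ↔ IsWandering (ρ.rowKL k l) ζ := by
  rw [isWandering_rowKL_iff]
  refine and_congr_right fun hζ => ⟨fun h r hr A hA => ?_, fun h => ?_⟩
  · obtain ⟨u, v, hu, hv, rfl⟩ := hA
    have h1 := h r 0 u [] v [] hu hv (by simp) (by simp)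
    have hu0 : u ≠ [] := List.length_pos_iff.1 (by rw [hu]; positivity)
    simpa [hu0] using h1
  have key : ∀ (p p' : ℕ), p < p' → ∀ A B, ρ.HasDegree (p * k) (p * l) A →
      ρ.HasDegree (p' * k) (p' * l) B → ⟪B ζ, A ζ⟫ = 0 := by
    intro p p' hpp A B hA hB
    obtain ⟨r, rfl⟩ := Nat.exists_eq_add_of_lt hpp
    rw [add_assoc, add_mul p, add_mul p] at hB
    obtain ⟨B₁, C, hB₁, hC, rfl⟩ := hB.exists_mul_eq
    exact hB₁.inner_eq_zero hA (h (r + 1) r.succ_pos C hC)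
  intro p p' u u' v v' hu hv hu' hv'
  have hne : p ≠ p' → ¬(u = u' ∧ v = v') := by
    rintro hp ⟨rfl, -⟩
    exact hp (Nat.eq_of_mul_eq_mul_right hk (hu.symm.trans hu'))
  rcases lt_trichotomy p p' with hp | rfl | hp
  · rw [if_neg (hne hp.ne), ← inner_conj_symm,
      key p p' hp _ _ ⟨u, v, hu, hv, rfl⟩ ⟨u', v', hu', hv', rfl⟩, map_zero]
  · rw [ρ.inner_wordOp_mul (hu.trans hu'.symm) (hv.trans hv'.symm), inner_self_eq_norm_sq_to_K, hζ]
    simp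
  · rw [if_neg (hne hp.ne'),
      key p' p hp _ _ ⟨u', v', hu', hv', rfl⟩ ⟨u, v, hu, hv, rfl⟩]

theorem structSpaceKL_eq (hk : 0 < k) :
    ρ.structSpaceKL k l = (wanderingSpan (ρ.rowKL k l) ⊤)ᗮ := by
  simp [structSpaceKL, wanderingSpan, isWanderingKL_iff hk]

theorem HasDegree.apply_mem_wanderingSpan {c d : ℕ} {G : H →L[ℂ] H} (hG : ρ.HasDegree c d G)
    {x : H} (hx : x ∈ wanderingSpan (ρ.rowKL k l) ⊤) :
    G x ∈ wanderingSpan (ρ.rowKL k l) ⊤ := by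
  have : wanderingSpan (ρ.rowKL k l) ⊤ ≤
      (wanderingSpan (ρ.rowKL k l) ⊤).comap (G : H →ₗ[ℂ] H) := by
    refine wanderingSpan_le ((isClosed_wanderingSpan _ _).preimage G.continuous) ?_
    intro ζ _ hζ
    refine mem_wanderingSpan Submodule.mem_top ?_
    rw [isWandering_rowKL_iff] at hζ ⊢
    refine ⟨by rw [← hζ.1]; exact hG.norm_apply ζ, fun r hr A hA => ?_⟩
    have hAG := hA.mul hG
    rw [add_comm _ c, add_comm _ d] at hAG
    obtain ⟨B, C, hB, hC, h⟩ := hAG.exists_mul_eq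
    have h' : A (G ζ) = B (C ζ) := congrArg (fun A : H →L[ℂ] H => A ζ) h
    exact h' ▸ hB.inner_eq_zero hG (hζ.2 r hr C hC)
  exact this hx

/-- For Cuntz-type representations, membership of the backward orbit in an invariant subspace
passes to smaller degrees. -/
theorem star_apply_mem_of_hasDegree (hρ : ρ.CuntzType) {W : Submodule ℂ H}
    (hW : ∀ c d G, ρ.HasDegree c d G → ∀ x ∈ W, G x ∈ W) {x : H} {a b : ℕ} (c d : ℕ)
    (h : ∀ A, ρ.HasDegree (a + c) (b + d) A → star A x ∈ W) {A : H →L[ℂ] H}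
    (hA : ρ.HasDegree a b A) : star A x ∈ W := by
  induction c generalizing A with
  | zero =>
    induction d generalizing A with
    | zero => exact h A hA
    | succ d ih =>
      refine ih (fun A hA => ?_) hA
      rw [← sum_apply_star_apply hρ.2 (star A x)]
      refine W.sum_mem fun j _ => hW _ _ _ (HasDegree.T j) _ ?_
      have := h (A * ρ.T j) (hA.mul (HasDegree.T j))
      rwa [star_mul] at this
  | succ c ih =>
    refine ih (fun A hA => ?_) hA
    rw [← sum_apply_star_apply hρ.1 (star A x)]
    refine W.sum_mem fun i _ => hW _ _ _ (HasDegree.S i) _ ?_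
    have := h (A * ρ.S i) (by
      have := hA.mul (HasDegree.S i)
      rwa [add_assoc, add_zero] at this)
    rwa [star_mul] at this

end TwoGraphRep

end TwoGraph

/-- If the row-isometry `[S_u T_v : |u|=k, |v|=l]` is of dilation type, then its structure
projection dominates all the others: `P_{p,q}H ⊆ P_{k,l}H` for all `p, q > 0`. -/
theorem statement8 {m n : ℕ} (hm : 0 < m) (hn : 0 < n) (hmn : 2 ≤ m ∨ 2 ≤ n)
    {θ : Equiv.Perm (Fin m × Fin n)} {H : Type*}
    [NormedAddCommGroup H] [InnerProductSpace ℂ H] [CompleteSpace H]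
    (ρ : TwoGraphRep m n θ H) (hCuntz : ρ.CuntzType)
    (k l : ℕ) (hk : 0 < k) (hl : 0 < l)
    (hdil : IsDilationType (ρ.rowKL k l)) :
    ∀ p q : ℕ, 0 < p → 0 < q → ρ.structSpaceKL p q ≤ ρ.structSpaceKL k l := by
  intro p q hp hq
  rw [TwoGraphRep.structSpaceKL_eq hp, TwoGraphRep.structSpaceKL_eq hk]
  refine Submodule.orthogonal_le ?_
  set W := wanderingSpan (ρ.rowKL k l) ⊤ with hWdef
  have hW : ∀ c d G, ρ.HasDegree c d G → ∀ x ∈ W, G x ∈ W :=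
    fun c d G hG x hx => hG.apply_mem_wanderingSpan hx
  obtain ⟨a, b, hab⟩ : ∃ a b : (Fin k → Fin m) × (Fin l → Fin n), a ≠ b := by
    rcases hmn with h | h
    · refine ⟨(fun _ => ⟨0, by omega⟩, fun _ => ⟨0, hn⟩),
        (fun _ => ⟨1, by omega⟩, fun _ => ⟨0, hn⟩), fun he => ?_⟩
      have := congrFun (Prod.ext_iff.1 he).1 ⟨0, hk⟩
      simp at this
    · refine ⟨(fun _ => ⟨0, hm⟩, fun _ => ⟨0, by omega⟩),
        (fun _ => ⟨0, hm⟩, fun _ => ⟨1, by omega⟩), fun he => ?_⟩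
      have := congrFun (Prod.ext_iff.1 he).2 ⟨0, hl⟩
      simp at this
  refine (le_wanderingSpan (ρ.isRowIsometry_rowKL p q) (isClosed_wanderingSpan _ _)
    (fun c x hx => hW _ _ _ (ρ.hasDegree_rowKL p q c) x hx) ?_ ?_).trans
    (wanderingSpan_mono le_top)
  · intro x hx
    have := TwoGraphRep.star_apply_mem_of_hasDegree (x := x) hCuntz hW (a := 0) (b := 0) p q
      (fun A hA => by
        rw [zero_add, zero_add] at hA
        obtain ⟨c, rfl⟩ := hA.exists_rowKL_eq
        exact hx c) TwoGraphRep.HasDegree.one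
    simpa using this
  · intro x hx
    refine hdil.eq_zero_of_star_wordOp_mem (ρ.isRowIsometry_rowKL k l) hab fun w => ?_
    set r := w.length
    obtain ⟨c, hc⟩ : ∃ c, (r * k + r * l) * p = r * k + c :=
      Nat.exists_eq_add_of_le (by nlinarith [Nat.zero_le (r * l * p), Nat.zero_le (r * k)])
    obtain ⟨d, hd⟩ : ∃ d, (r * k + r * l) * q = r * l + d :=
      Nat.exists_eq_add_of_le (by nlinarith [Nat.zero_le (r * k * q), Nat.zero_le (r * l)])
    refine TwoGraphRep.star_apply_mem_of_hasDegree hCuntz hW c d (fun A hA => ?_)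
      (ρ.hasDegree_wordOp_rowKL k l w)
    rw [← hc, ← hd] at hA
    obtain ⟨w', -, rfl⟩ := hA.exists_wordOp_eq
    exact hx w'
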